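/- arXiv:1901.08839 — 2 statements merged into one kernel-verified Lean document; each statement's English description precedes it below -/
import Mathlib

section
/- There exists a universal constant C > 0 such that the following holds. Let n ∈ ℕ, let 0 < p ≤ 1/2 with pn ∈ ℤ, let k ∈ ℕ, and let f : S(n,p) → ℝ be of degree ≤ k. Then E_x[f(x)^8] ≤ p^{−Ck} · (E_x[f(x)²])^4, where x is uniform on S(n,p). -/
open Finset
open scoped Classical

/-- A point of the slice `S(n,p)`: a Boolean vector whose number of ones equals `p * n`. -/
abbrev SlicePoint (n : ℕ) (p : ℝ) : Type :=
  {x : Fin n → Bool // ((Finset.univ.filter (fun i => x i = true)).card : ℝ) = p * n}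

variable {n : ℕ} {p : ℝ}

/-- Expectation with respect to the uniform measure on the slice. -/
noncomputable def sExp (f : SlicePoint n p → ℝ) : ℝ :=
  (∑ x : SlicePoint n p, f x) / (Fintype.card (SlicePoint n p) : ℝ)

/-- The inner product `⟨f,g⟩ = E_x [f x * g x]` on functions on the slice. -/
noncomputable def sInner (f g : SlicePoint n p → ℝ) : ℝ :=
  sExp (fun x => f x * g x)

/-- `‖f‖₂² = E_x [f x ^ 2]`. -/
noncomputable def sNormSq (f : SlicePoint n p → ℝ) : ℝ := sInner f f

/-- `‖f‖₂`. -/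
noncomputable def sNorm (f : SlicePoint n p → ℝ) : ℝ := Real.sqrt (sNormSq f)

/-- The `i`-th coordinate of a slice point, viewed as a real number in `{0,1}`. -/
def coordR (x : SlicePoint n p) (i : Fin n) : ℝ := if x.1 i then 1 else 0

/-- `AND_T (x) = ∏_{i ∈ T} x_i`. -/
def andT (T : Finset (Fin n)) : SlicePoint n p → ℝ := fun x => ∏ i ∈ T, coordR x i

/-- The space `L_k` of functions of degree at most `k` on the slice. -/
def degLE (n : ℕ) (p : ℝ) (k : ℕ) : Submodule ℝ (SlicePoint n p → ℝ) :=
  Submodule.span ℝ {g | ∃ T : Finset (Fin n), T.card ≤ k ∧ g = andT T}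

/-- The space `L_{k-1}` (i.e. spanned by `AND_T` with `|T| < k`). -/
def degLT (n : ℕ) (p : ℝ) (k : ℕ) : Submodule ℝ (SlicePoint n p → ℝ) :=
  Submodule.span ℝ {g | ∃ T : Finset (Fin n), T.card < k ∧ g = andT T}

/-- `fk` is the orthogonal projection `f^{≤ k}` of `f` onto `L_k`. -/
def IsLowProj (n : ℕ) (p : ℝ) (k : ℕ) (f fk : SlicePoint n p → ℝ) : Prop :=
  fk ∈ degLE n p k ∧ ∀ g ∈ degLE n p k, sInner (f - fk) g = 0

/-- `fk` is the orthogonal projection of `f` onto the span of `AND_T`, `|T| < k`. -/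
def IsLowProjLT (n : ℕ) (p : ℝ) (k : ℕ) (f fk : SlicePoint n p → ℝ) : Prop :=
  fk ∈ degLT n p k ∧ ∀ g ∈ degLT n p k, sInner (f - fk) g = 0

/-- `Pr_x [f x ≠ g x]` under the uniform measure on the slice. -/
noncomputable def probNe (f g : SlicePoint n p → ℝ) : ℝ :=
  sExp (fun x => if f x = g x then 0 else 1)

/-- The action of a permutation on a slice point: `(x^π)_{π i} = x_i`. -/
def permPt (π : Equiv.Perm (Fin n)) (x : SlicePoint n p) : SlicePoint n p :=
  ⟨fun i => x.1 (π.symm i), by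
    have h : (Finset.univ.filter (fun i => x.1 (π.symm i) = true)) =
        (Finset.univ.filter (fun i => x.1 i = true)).map π.toEmbedding := by
      ext i
      simp [Finset.mem_map_equiv]
    rw [h, Finset.card_map]
    exact x.2⟩

/-- The derivative operator `D_{ij} f = (f - f^{(ij)})/2`. -/
noncomputable def Dij (i j : Fin n) (f : SlicePoint n p → ℝ) : SlicePoint n p → ℝ :=
  fun x => (f x - f (permPt (Equiv.swap i j) x)) / 2

/-- The derivative operator `D_P` associated with a set `P` of pairs,
obtained by composing the `D_{ab}` for `(a,b) ∈ P` (these commute for tuples). -/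
noncomputable def DP (P : Finset (Fin n × Fin n)) (f : SlicePoint n p → ℝ) :
    SlicePoint n p → ℝ :=
  P.toList.foldr (fun q g => Dij q.1 q.2 g) f

/-- `P` is a `k`-tuple: `k` pairs `(a,b)` with `a < b`, all `2k` entries distinct. -/
def IsTuple {n : ℕ} (k : ℕ) (P : Finset (Fin n × Fin n)) : Prop :=
  P.card = k ∧ (∀ q ∈ P, q.1 < q.2) ∧
    ∀ q ∈ P, ∀ r ∈ P, q ≠ r →
      q.1 ≠ r.1 ∧ q.1 ≠ r.2 ∧ q.2 ≠ r.1 ∧ q.2 ≠ r.2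

/-- `P` is shifted: for every pair `(a,b) ∈ P`, every `a' ≤ a` occurs as an entry of `P`. -/
def IsShifted {n : ℕ} (P : Finset (Fin n × Fin n)) : Prop :=
  ∀ q ∈ P, ∀ a : Fin n, a ≤ q.1 → ∃ r ∈ P, r.1 = a ∨ r.2 = a

/-- `P` is sorted: `a_i < a_j ↔ b_i < b_j`. -/
def IsSorted {n : ℕ} (P : Finset (Fin n × Fin n)) : Prop :=
  ∀ q ∈ P, ∀ r ∈ P, (q.1 < r.1 ↔ q.2 < r.2)

/-- `Ψ_P (x) = ∏_{(a,b) ∈ P} (x_b - x_a)`. -/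
def PsiP (P : Finset (Fin n × Fin n)) : SlicePoint n p → ℝ :=
  fun x => ∏ q ∈ P, (coordR x q.2 - coordR x q.1)

/-- The slice Laplacian `L f = f - (1 / C(n,2)) ∑_{i<j} f^{(ij)}`. -/
noncomputable def sliceLap (f : SlicePoint n p → ℝ) : SlicePoint n p → ℝ :=
  fun x => f x -
    (∑ q ∈ Finset.univ.filter (fun q : Fin n × Fin n => q.1 < q.2),
      f (permPt (Equiv.swap q.1 q.2) x)) / (n.choose 2 : ℝ)

/-- The noise operator `H_t = exp (-t L) = ∑_l (-t)^l L^l / l!`. -/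
noncomputable def Ht (t : ℝ) (f : SlicePoint n p → ℝ) : SlicePoint n p → ℝ :=
  fun x => ∑' l : ℕ, ((-t) ^ l / (l.factorial : ℝ)) * (sliceLap^[l] f) x

/-- The averaging operator `E_I f (x) = E_{Q ∼ S_I} [f (x^Q)]`, averaging over a uniformly
random permutation of the coordinates in `I` (fixing the coordinates outside `I`). -/
noncomputable def avgI (I : Finset (Fin n)) (f : SlicePoint n p → ℝ) : SlicePoint n p → ℝ :=
  fun x => (∑ σ : {σ : Equiv.Perm (Fin n) // ∀ i ∉ I, σ i = i}, f (permPt σ.1 x)) /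
    (Fintype.card {σ : Equiv.Perm (Fin n) // ∀ i ∉ I, σ i = i} : ℝ)

/-- The conditional variance `V_I (f) = ‖f - E_I f‖₂²`. -/
noncomputable def condVar (I : Finset (Fin n)) (f : SlicePoint n p → ℝ) : ℝ :=
  sNormSq (f - avgI I f)

/-- Expectation with respect to the uniform measure on the discrete cube. -/
noncomputable def cExp {n : ℕ} (f : (Fin n → Bool) → ℝ) : ℝ :=
  (∑ x : Fin n → Bool, f x) / (2 ^ n : ℝ)

/-- The Fourier–Walsh coefficient `f̂ (S) = E_x [f x * χ_S x]`. -/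
noncomputable def walshCoeff {n : ℕ} (f : (Fin n → Bool) → ℝ) (S : Finset (Fin n)) : ℝ :=
  cExp (fun x => f x * ∏ i ∈ S, (if x i then (-1 : ℝ) else 1))

/-- The Fourier weight of `f` beyond degree `k`: `W^{>k} (f) = ∑_{|S| > k} f̂(S)²`. -/
noncomputable def WAbove {n : ℕ} (k : ℕ) (f : (Fin n → Bool) → ℝ) : ℝ :=
  ∑ S ∈ Finset.univ.filter (fun S : Finset (Fin n) => k < S.card), walshCoeff f S ^ 2

/-- `Pr_x [f x ≠ g x]` under the uniform measure on the cube. -/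
noncomputable def cProbNe {n : ℕ} (f g : (Fin n → Bool) → ℝ) : ℝ :=
  cExp (fun x => if f x = g x then 0 else 1)

/-- The action of a permutation on a point of the cube: `(x^π)_{π i} = x_i`. -/
def cPerm {n : ℕ} (π : Equiv.Perm (Fin n)) (x : Fin n → Bool) : Fin n → Bool :=
  fun i => x (π.symm i)

/-- The derivative operator on the cube. -/
noncomputable def cDij {n : ℕ} (i j : Fin n) (f : (Fin n → Bool) → ℝ) :
    (Fin n → Bool) → ℝ :=
  fun x => (f x - f (cPerm (Equiv.swap i j) x)) / 2


/-! ### Two point inequality -/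

namespace SliceLS

/-- `t log t`. -/
noncomputable def Phi (t : ℝ) : ℝ := t * Real.log t

lemma pt_bound {g M K : ℝ} (hg : 0 ≤ g) (hM : 0 < M) (hK : 0 ≤ K)
    (hl : Real.log (g / M) ≤ K) :
    g ^ 2 * Real.log (g / M) ≤ M * (g - M) + 2 * (g - M) ^ 2 + (g - M) ^ 2 * K := by
  rcases hg.eq_or_lt with rfl | hg
  · simp; nlinarith [mul_nonneg (sq_nonneg M) hK, sq_nonneg M]
  have hu : 0 < g / M := by positivity
  have h1 : Real.log (g / M) ≤ g / M - 1 := Real.log_le_sub_one_of_pos hu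
  have h2 : g ^ 2 * Real.log (g / M) ≤ g ^ 2 * (g / M - 1) := by gcongr
  set u := g / M with hu'
  have hgu : g = M * u := by rw [hu']; field_simp
  have key : u ^ 2 * Real.log u ≤ (u - 1) + 2 * (u - 1) ^ 2 + (u - 1) ^ 2 * K := by
    rcases le_total u 1 with h | h
    · have : u ^ 2 * Real.log u ≤ u ^ 2 * (u - 1) := by gcongr
      nlinarith [mul_nonneg (sq_nonneg (u - 1)) hK, mul_nonneg (sq_nonneg (u - 1)) (sub_nonneg.2 h)]
    · have e : u ^ 2 * Real.log u = (2 * u - 1) * Real.log u + (u - 1) ^ 2 * Real.log u := by ring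
      have h3 : (2 * u - 1) * Real.log u ≤ (2 * u - 1) * (u - 1) := by
        apply mul_le_mul_of_nonneg_left h1; linarith
      have h4 : (u - 1) ^ 2 * Real.log u ≤ (u - 1) ^ 2 * K := by gcongr
      rw [e]; nlinarith
  have := mul_le_mul_of_nonneg_left key (sq_nonneg M)
  rw [hgu]
  nlinarith

lemma two_point {p a b : ℝ} (hp : 0 < p) (hp1 : p < 1) (ha : 0 ≤ a) (hb : 0 ≤ b) :
    p * Phi (a ^ 2) + (1 - p) * Phi (b ^ 2) - Phi (p * a ^ 2 + (1 - p) * b ^ 2)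
      ≤ 5 * Real.binEntropy p * (a - b) ^ 2 := by
  have hq : 0 < 1 - p := by linarith
  set M := p * a + (1 - p) * b with hM
  have hM0 : 0 ≤ M := by positivity
  have hH : 0 ≤ Real.binEntropy p := Real.binEntropy_nonneg hp.le hp1.le
  rcases hM0.eq_or_lt with h0 | hMp
  · have ha0 : a = 0 := by
      by_contra h
      have : 0 < a := lt_of_le_of_ne ha (Ne.symm h)
      have : 0 < M := by positivity
      linarith
    have hb0 : b = 0 := by
      by_contra h
      have : 0 < b := lt_of_le_of_ne hb (Ne.symm h)
      have : 0 < M := by positivity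
      linarith
    simp [ha0, hb0, Phi]
  set N := p * a ^ 2 + (1 - p) * b ^ 2 with hN
  have hNM : N - M ^ 2 = p * (1 - p) * (a - b) ^ 2 := by rw [hN, hM]; ring
  have hNpos : 0 < N := by
    have : 0 ≤ p * (1 - p) * (a - b) ^ 2 := by positivity
    have : 0 < M ^ 2 := by positivity
    linarith
  have hPhiN : N * Real.log (M ^ 2) + N - M ^ 2 ≤ Phi N := by
    have h := Real.log_le_sub_one_of_pos (x := M ^ 2 / N) (by positivity)
    rw [Real.log_div (by positivity) (by positivity)] at h
    have h2 := mul_le_mul_of_nonneg_left h hNpos.le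
    have h3 : N * (M ^ 2 / N - 1) = M ^ 2 - N := by field_simp
    unfold Phi
    nlinarith
  have hexp : ∀ g : ℝ, 0 ≤ g → Phi (g ^ 2) = 2 * (g ^ 2 * Real.log (g / M)) + g ^ 2 * Real.log (M ^ 2) := by
    intro g hg
    rcases hg.eq_or_lt with rfl | hg
    · simp [Phi]
    · rw [Phi, Real.log_div hg.ne' hMp.ne', Real.log_pow, Real.log_pow]; push_cast; ring
  have hlp : Real.log p ≤ 0 := Real.log_nonpos hp.le hp1.le
  have hlq : Real.log (1 - p) ≤ 0 := Real.log_nonpos hq.le (by linarith)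
  have la : Real.log (a / M) ≤ -Real.log p := by
    rcases ha.eq_or_lt with rfl | ha
    · simp; exact hlp
    rw [← Real.log_inv]
    apply Real.log_le_log (by positivity)
    rw [div_le_iff₀ hMp, hM]
    have : p⁻¹ * (p * a + (1 - p) * b) = a + p⁻¹ * ((1 - p) * b) := by field_simp
    rw [this]
    have : 0 ≤ p⁻¹ * ((1 - p) * b) := by positivity
    linarith
  have lb : Real.log (b / M) ≤ -Real.log (1 - p) := by
    rcases hb.eq_or_lt with rfl | hb
    · simp; exact hlq
    rw [← Real.log_inv]
    apply Real.log_le_log (by positivity)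
    rw [div_le_iff₀ hMp, hM]
    have : (1 - p)⁻¹ * (p * a + (1 - p) * b) = b + (1 - p)⁻¹ * (p * a) := by field_simp; ring
    rw [this]
    have : 0 ≤ (1 - p)⁻¹ * (p * a) := by positivity
    linarith
  have ba := pt_bound ha hMp (by linarith) la
  have bb := pt_bound hb hMp (by linarith) lb
  rw [hexp a ha, hexp b hb]
  have ea : a - M = (1 - p) * (a - b) := by rw [hM]; ring
  have eb : b - M = - (p * (a - b)) := by rw [hM]; ring
  rw [ea] at ba
  rw [eb] at bb
  have ba' := mul_le_mul_of_nonneg_left ba hp.le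
  have bb' := mul_le_mul_of_nonneg_left bb hq.le
  have hHe : Real.binEntropy p = p * (-Real.log p) + (1 - p) * (-Real.log (1 - p)) := by
    rw [Real.binEntropy, Real.log_inv, Real.log_inv]
  have l1 : 1 - p ≤ - Real.log p := by
    have := Real.log_le_sub_one_of_pos hp; linarith
  have hHp : p * (1 - p) ≤ Real.binEntropy p := by
    rw [hHe]
    have : 0 ≤ (1 - p) * (-Real.log (1 - p)) := mul_nonneg hq.le (by linarith)
    nlinarith
  set d := (a - b) ^ 2 with hd
  have hd0 : 0 ≤ d := sq_nonneg _
  set X := -Real.log p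
  set Y := -Real.log (1 - p)
  have hX : 0 ≤ X := by simp only [X]; linarith
  have hY : 0 ≤ Y := by simp only [Y]; linarith
  have t1 : p * (1 - p) ^ 2 * X ≤ p * X := by
    have h : (1 - p) ^ 2 ≤ 1 := pow_le_one₀ hq.le (by linarith)
    have := mul_le_of_le_one_left (mul_nonneg hp.le hX) h
    calc p * (1 - p) ^ 2 * X = (1 - p) ^ 2 * (p * X) := by ring
      _ ≤ _ := this
  have t2 : (1 - p) * p ^ 2 * Y ≤ (1 - p) * Y := by
    have h : p ^ 2 ≤ 1 := pow_le_one₀ hp.le hp1.le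
    have := mul_le_of_le_one_left (mul_nonneg hq.le hY) h
    calc (1 - p) * p ^ 2 * Y = p ^ 2 * ((1 - p) * Y) := by ring
      _ ≤ _ := this
  have t3 : 3 * (p * (1 - p)) + 2 * (p * (1 - p) ^ 2 * X) + 2 * ((1 - p) * p ^ 2 * Y)
      ≤ 5 * Real.binEntropy p := by linarith
  have t4 := mul_le_mul_of_nonneg_right t3 hd0
  refine le_trans ?_ t4
  have e1 : p * (2 * (a ^ 2 * Real.log (a / M)) + a ^ 2 * Real.log (M ^ 2)) +
      (1 - p) * (2 * (b ^ 2 * Real.log (b / M)) + b ^ 2 * Real.log (M ^ 2)) - Phi N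
      = 2 * (p * (a ^ 2 * Real.log (a / M))) + 2 * ((1 - p) * (b ^ 2 * Real.log (b / M)))
        + N * Real.log (M ^ 2) - Phi N := by rw [hN]; ring
  rw [e1]
  have e2 : p * (M * ((1 - p) * (a - b)) + 2 * ((1 - p) * (a - b)) ^ 2 + ((1 - p) * (a - b)) ^ 2 * X)
     + (1 - p) * (M * -(p * (a - b)) + 2 * (-(p * (a - b))) ^ 2 + (-(p * (a - b))) ^ 2 * Y)
     = d * (2 * (p * (1 - p)) + p * (1 - p) ^ 2 * X + (1 - p) * p ^ 2 * Y) := by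
    rw [hd]; ring
  linarith

/-! ### Combinatorial identities -/

section Comb
variable {α : Type*} [DecidableEq α]

lemma sum_split {V : Finset α} {i : α} (hi : i ∈ V) (m : ℕ) (F : Finset α → ℝ) :
    ∑ x ∈ powersetCard (m + 1) V, F x =
      ∑ y ∈ powersetCard m (V.erase i), F (insert i y)
        + ∑ y ∈ powersetCard (m + 1) (V.erase i), F y := by
  conv_lhs => rw [← insert_erase hi]
  rw [powersetCard_succ_insert (notMem_erase i V), sum_union, add_comm, sum_image]
  · intro x hx y hy h
    have hx' : i ∉ x := fun h' => notMem_erase i V ((mem_powersetCard.1 hx).1 h')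
    have hy' : i ∉ y := fun h' => notMem_erase i V ((mem_powersetCard.1 hy).1 h')
    rw [← erase_insert hx', ← erase_insert hy', h]
  · rw [disjoint_left]
    intro x hx hx2
    obtain ⟨y, _, rfl⟩ := mem_image.1 hx2
    exact notMem_erase i V ((mem_powersetCard.1 hx).1 (mem_insert_self i y))

lemma dc0 (V : Finset α) (m : ℕ) (K : α → Finset α → ℝ) :
    ∑ i ∈ V, ∑ y ∈ powersetCard m (V.erase i), K i y =
      ∑ x ∈ powersetCard m V, ∑ i ∈ V \ x, K i x := by
  apply sum_comm'
  intro i x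
  simp only [mem_powersetCard, mem_sdiff]
  constructor
  · rintro ⟨hi, hx, hc⟩
    exact ⟨⟨hi, fun h => notMem_erase i V (hx h)⟩, hx.trans (erase_subset _ _), hc⟩
  · rintro ⟨⟨hi, hx⟩, hs, hc⟩
    exact ⟨hi, fun a ha => mem_erase.2 ⟨fun h => hx (h ▸ ha), hs ha⟩, hc⟩

lemma dc1 (V : Finset α) (m : ℕ) (K : α → Finset α → ℝ) :
    ∑ i ∈ V, ∑ y ∈ powersetCard m (V.erase i), K i (insert i y) =
      ∑ x ∈ powersetCard (m + 1) V, ∑ i ∈ x, K i x := by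
  have h : ∀ i ∈ V, ∑ y ∈ powersetCard m (V.erase i), K i (insert i y) =
      ∑ x ∈ powersetCard (m + 1) V with i ∈ x, K i x := by
    intro i hi
    rw [sum_filter, sum_split hi]
    have : ∑ y ∈ powersetCard (m + 1) (V.erase i), (if i ∈ y then K i y else 0) = 0 := by
      apply sum_eq_zero
      intro y hy
      rw [if_neg]
      exact fun h' => notMem_erase i V ((mem_powersetCard.1 hy).1 h')
    rw [this, add_zero]
    simp
  rw [sum_congr rfl h]
  apply sum_comm'
  intro i x
  simp only [mem_filter, mem_powersetCard]
  constructor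
  · rintro ⟨hi, ⟨hx, hc⟩, h⟩
    exact ⟨h, hx, hc⟩
  · rintro ⟨h, hx, hc⟩
    exact ⟨hx h, ⟨hx, hc⟩, h⟩

lemma dc_swap (W : Finset α) (m : ℕ) (F : Finset α → ℝ) :
    ∑ y ∈ powersetCard m W, ∑ j ∈ W \ y, F (insert j y) =
      (m + 1) * ∑ z ∈ powersetCard (m + 1) W, F z := by
  rw [← dc0 W m (fun j y => F (insert j y)), dc1 W m (fun _ x => F x), mul_sum]
  apply sum_congr rfl
  intro x hx
  rw [sum_const, (mem_powersetCard.1 hx).2, nsmul_eq_mul]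
  push_cast; ring

/-- Unnormalised Dirichlet form. -/
noncomputable def QQ (V : Finset α) (m : ℕ) (f : Finset α → ℝ) : ℝ :=
  ∑ x ∈ powersetCard m V, ∑ i ∈ x, ∑ j ∈ V \ x, (f x - f (insert j (x.erase i))) ^ 2

/-- Average. -/
noncomputable def av (V : Finset α) (m : ℕ) (F : Finset α → ℝ) : ℝ :=
  (∑ x ∈ powersetCard m V, F x) / (V.card.choose m : ℝ)

/-- Entropy. -/
noncomputable def EntF (V : Finset α) (m : ℕ) (F : Finset α → ℝ) : ℝ :=
  av V m (fun x => Phi (F x)) - Phi (av V m F)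

lemma QQ_nonneg (V : Finset α) (m : ℕ) (f : Finset α → ℝ) : 0 ≤ QQ V m f := by
  unfold QQ; positivity

lemma sum_QQ1 (V : Finset α) (m : ℕ) (f : Finset α → ℝ) :
    ∑ i ∈ V, QQ (V.erase i) m (fun y => f (insert i y)) = m * QQ V (m + 1) f := by
  have h : ∀ i ∈ V, QQ (V.erase i) m (fun y => f (insert i y)) =
      ∑ y ∈ powersetCard m (V.erase i), (fun (i : α) (x : Finset α) =>
        ∑ i' ∈ x.erase i, ∑ j ∈ V \ x, (f x - f (insert j (x.erase i'))) ^ 2) i (insert i y) := by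
    intro i hi
    unfold QQ
    apply sum_congr rfl
    intro y hy
    have hy' : i ∉ y := fun h' => notMem_erase i V ((mem_powersetCard.1 hy).1 h')
    simp only
    rw [erase_insert hy']
    apply sum_congr rfl
    intro i' hi'
    have hne : i ≠ i' := fun h => hy' (h ▸ hi')
    have e1 : V.erase i \ y = V \ insert i y := by
      ext a; simp only [mem_sdiff, mem_erase, mem_insert]; tauto
    rw [e1]
    apply sum_congr rfl
    intro j hj
    rw [Finset.insert_comm, erase_insert_of_ne hne]
  rw [sum_congr rfl h]
  refine (dc1 V m (fun (i : α) (x : Finset α) =>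
        ∑ i' ∈ x.erase i, ∑ j ∈ V \ x, (f x - f (insert j (x.erase i'))) ^ 2)).trans ?_
  rw [QQ, mul_sum]
  apply sum_congr rfl
  intro x hx
  have hc := (mem_powersetCard.1 hx).2
  have : ∀ i ∈ x, ∑ i' ∈ x.erase i, ∑ j ∈ V \ x, (f x - f (insert j (x.erase i'))) ^ 2
      = ∑ i' ∈ x, ∑ j ∈ V \ x, (f x - f (insert j (x.erase i'))) ^ 2
        - ∑ j ∈ V \ x, (f x - f (insert j (x.erase i))) ^ 2 := by
    intro i hi
    rw [← add_sum_erase x _ hi]; ring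
  rw [sum_congr rfl this, sum_sub_distrib, sum_const, hc, nsmul_eq_mul]
  push_cast; ring

lemma sum_QQ0 (V : Finset α) (m : ℕ) (f : Finset α → ℝ) (hm : m ≤ V.card) :
    ∑ i ∈ V, QQ (V.erase i) m f = ((V.card : ℝ) - m - 1) * QQ V m f := by
  unfold QQ
  rw [dc0 V m (fun i x => ∑ i' ∈ x, ∑ j ∈ V.erase i \ x, (f x - f (insert j (x.erase i'))) ^ 2),
    mul_sum]
  apply sum_congr rfl
  intro x hx
  obtain ⟨hs, hc⟩ := mem_powersetCard.1 hx
  have : ∀ i ∈ V \ x, ∑ i' ∈ x, ∑ j ∈ V.erase i \ x, (f x - f (insert j (x.erase i'))) ^ 2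
      = ∑ i' ∈ x, ∑ j ∈ V \ x, (f x - f (insert j (x.erase i'))) ^ 2
        - ∑ i' ∈ x, (f x - f (insert i (x.erase i'))) ^ 2 := by
    intro i hi
    rw [← sum_sub_distrib]
    apply sum_congr rfl
    intro i' _
    rw [← add_sum_erase (V \ x) _ hi, erase_sdiff_comm]; ring
  rw [sum_congr rfl this, sum_sub_distrib, sum_const, nsmul_eq_mul, card_sdiff_of_subset hs, hc,
    Nat.cast_sub hm, sum_comm (s := V \ x)]
  ring

lemma sum_R (V : Finset α) (m : ℕ) (f : Finset α → ℝ) :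
    ∑ i ∈ V, ∑ y ∈ powersetCard m (V.erase i), ∑ j ∈ V.erase i \ y,
      (f (insert i y) - f (insert j y)) ^ 2 = QQ V (m + 1) f := by
  have h : ∀ i ∈ V, ∑ y ∈ powersetCard m (V.erase i), ∑ j ∈ V.erase i \ y,
      (f (insert i y) - f (insert j y)) ^ 2 =
      ∑ y ∈ powersetCard m (V.erase i), (fun (i : α) (x : Finset α) =>
        ∑ j ∈ V \ x, (f x - f (insert j (x.erase i))) ^ 2) i (insert i y) := by
    intro i hi
    apply sum_congr rfl
    intro y hy
    have hy' : i ∉ y := fun h' => notMem_erase i V ((mem_powersetCard.1 hy).1 h')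
    simp only
    rw [erase_insert hy']
    have e1 : V.erase i \ y = V \ insert i y := by
      ext a; simp only [mem_sdiff, mem_erase, mem_insert]; tauto
    rw [e1]
  rw [sum_congr rfl h]
  exact dc1 V m (fun (i : α) (x : Finset α) =>
        ∑ j ∈ V \ x, (f x - f (insert j (x.erase i))) ^ 2)

/-- Reverse triangle inequality in `ℓ²`. -/
lemma sqrt_sub_sq {ι : Type*} (s : Finset ι) (u v : ι → ℝ) :
    (√(∑ i ∈ s, u i ^ 2) - √(∑ i ∈ s, v i ^ 2)) ^ 2 ≤ ∑ i ∈ s, (u i - v i) ^ 2 := by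
  have hu : 0 ≤ ∑ i ∈ s, u i ^ 2 := by positivity
  have hv : 0 ≤ ∑ i ∈ s, v i ^ 2 := by positivity
  have h := Real.sum_mul_le_sqrt_mul_sqrt s u v
  have e : ∑ i ∈ s, (u i - v i) ^ 2 = ∑ i ∈ s, u i ^ 2 + ∑ i ∈ s, v i ^ 2
      - 2 * ∑ i ∈ s, u i * v i := by
    rw [mul_sum, ← sum_add_distrib, ← sum_sub_distrib]
    exact sum_congr rfl fun i _ => by ring
  rw [e]
  nlinarith [Real.sq_sqrt hu, Real.sq_sqrt hv]

end Comb

/-! ### The log-Sobolev inequality on the slice (Lee--Yau) -/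

section LogSob
variable {α : Type*} [DecidableEq α]

lemma coupling {V : Finset α} {i : α} (hi : i ∈ V) {l k : ℕ} (hV : V.card = l + 1) (hk : k < l)
    (f : Finset α → ℝ) :
    (√(av (V.erase i) k (fun y => f (insert i y) ^ 2)) - √(av (V.erase i) (k + 1) (fun y => f y ^ 2))) ^ 2
      ≤ (∑ y ∈ powersetCard k (V.erase i), ∑ j ∈ V.erase i \ y,
      (f (insert i y) - f (insert j y)) ^ 2) / ((l.choose k : ℝ) * ((l : ℝ) - k)) := by
  have hW : (V.erase i).card = l := by rw [card_erase_of_mem hi, hV]; rfl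
  have hN1 : (0 : ℝ) < l.choose k := by exact_mod_cast Nat.choose_pos hk.le
  have hN0 : (0 : ℝ) < l.choose (k + 1) := by exact_mod_cast Nat.choose_pos hk
  have hlk : (0 : ℝ) < (l : ℝ) - k := by
    have : (k : ℝ) < l := by exact_mod_cast hk
    linarith
  have hch : (l.choose (k + 1) : ℝ) * (k + 1) = l.choose k * ((l : ℝ) - k) := by
    have := Nat.choose_succ_right_eq l k
    have h2 : ((l.choose (k + 1) * (k + 1) : ℕ) : ℝ) = ((l.choose k * (l - k) : ℕ) : ℝ) := by rw [this]
    rw [Nat.cast_mul, Nat.cast_mul, Nat.cast_sub hk.le] at h2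
    exact_mod_cast h2
  set Z := (l.choose k : ℝ) * ((l : ℝ) - k) with hZ
  have hZ0 : 0 < Z := by positivity
  have key := sqrt_sub_sq ((powersetCard k (V.erase i)).sigma (fun y => V.erase i \ y))
    (fun q => f (insert i q.1)) (fun q => f (insert q.2 q.1))
  rw [sum_sigma, sum_sigma, sum_sigma] at key
  simp only at key
  rw [dc_swap (V.erase i) k (fun x => f x ^ 2)] at key
  have e1 : ∑ y ∈ powersetCard k (V.erase i), ∑ j ∈ V.erase i \ y, f (insert i y) ^ 2
      = ((l : ℝ) - k) * ∑ y ∈ powersetCard k (V.erase i), f (insert i y) ^ 2 := by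
    rw [mul_sum]
    apply sum_congr rfl
    intro y hy
    obtain ⟨hs, hc⟩ := mem_powersetCard.1 hy
    rw [sum_const, card_sdiff_of_subset hs, hc, hW, nsmul_eq_mul, Nat.cast_sub hk.le]
  rw [e1] at key
  have a1 : ((l : ℝ) - k) * ∑ y ∈ powersetCard k (V.erase i), f (insert i y) ^ 2
      = Z * av (V.erase i) k (fun y => f (insert i y) ^ 2) := by
    rw [av, hW, hZ]; field_simp
  have a0 : ((k : ℝ) + 1) * ∑ y ∈ powersetCard (k + 1) (V.erase i), f y ^ 2
      = Z * av (V.erase i) (k + 1) (fun y => f y ^ 2) := by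
    rw [av, hW, ← hch]; field_simp
  rw [a1, a0, Real.sqrt_mul hZ0.le, Real.sqrt_mul hZ0.le, ← mul_sub, mul_pow, Real.sq_sqrt hZ0.le] at key
  rw [le_div_iff₀ hZ0, mul_comm]
  exact key

lemma av_nonneg (V : Finset α) (m : ℕ) (F : Finset α → ℝ) (hF : ∀ x, 0 ≤ F x) : 0 ≤ av V m F := by
  unfold av
  exact div_nonneg (sum_nonneg fun x _ => hF x) (Nat.cast_nonneg _)

lemma ent_split {V : Finset α} {i : α} (hi : i ∈ V) {l k : ℕ} (hV : V.card = l + 1) (hk : k < l)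
    (F : Finset α → ℝ) (p : ℝ) (hp : p = ((k : ℝ) + 1) / ((l : ℝ) + 1)) :
    EntF V (k + 1) F = p * EntF (V.erase i) k (fun y => F (insert i y))
      + (1 - p) * EntF (V.erase i) (k + 1) F +
      (p * Phi (av (V.erase i) k (fun y => F (insert i y))) +
        (1 - p) * Phi (av (V.erase i) (k + 1) F) -
        Phi (p * av (V.erase i) k (fun y => F (insert i y)) + (1 - p) * av (V.erase i) (k + 1) F)) := by
  have hW : (V.erase i).card = l := by rw [card_erase_of_mem hi, hV]; rfl
  have hN1 : (0 : ℝ) < l.choose k := by exact_mod_cast Nat.choose_pos hk.le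
  have hN0 : (0 : ℝ) < l.choose (k + 1) := by exact_mod_cast Nat.choose_pos hk
  have hN : (0 : ℝ) < (l + 1).choose (k + 1) := by
    exact_mod_cast Nat.choose_pos (show k + 1 ≤ l + 1 by omega)
  have hs : ((l + 1).choose (k + 1) : ℝ) = l.choose k + l.choose (k + 1) := by
    rw [Nat.choose_succ_succ]; push_cast; ring
  have hc : ((l : ℝ) + 1) * l.choose k = (l + 1).choose (k + 1) * ((k : ℝ) + 1) := by
    exact_mod_cast Nat.add_one_mul_choose_eq l k
  have hp1 : p = l.choose k / (l + 1).choose (k + 1) := by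
    rw [hp, div_eq_div_iff (by positivity) hN.ne']; linarith
  have hp0 : 1 - p = l.choose (k + 1) / (l + 1).choose (k + 1) := by
    rw [hp1, hs]; rw [hs] at hN; field_simp; ring
  have hav : ∀ G : Finset α → ℝ, av V (k + 1) G = p * av (V.erase i) k (fun y => G (insert i y))
      + (1 - p) * av (V.erase i) (k + 1) G := by
    intro G
    rw [hp0, hp1, av, av, av, hW, hV, sum_split hi]
    field_simp
  unfold EntF
  rw [hav, hav F]
  ring

theorem logSob (N : ℕ) : ∀ (V : Finset α), V.card = N → ∀ (m : ℕ), m ≤ N → ∀ f : Finset α → ℝ,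
    EntF V m (fun x => f x ^ 2) ≤
      5 * N * Real.binEntropy ((m : ℝ) / N) * (QQ V m f / ((N.choose m : ℝ) * m * ((N : ℝ) - m))) := by
  induction N with
  | zero =>
    intro V hV m hm f
    obtain rfl : m = 0 := by omega
    simp [EntF, av]
  | succ l ih =>
    intro V hV m hm f
    rcases hm.eq_or_lt with rfl | hlt
    · rw [← hV]
      simp [EntF, av]
    rcases m with _ | k
    · simp [EntF, av]
    have hk : k < l := by omega
    have hkl : (k : ℝ) + 1 ≤ l := by exact_mod_cast hk
    have hk0 : (0 : ℝ) ≤ k := Nat.cast_nonneg k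
    have hl0 : (0 : ℝ) < l := by linarith
    have hN1 : (0 : ℝ) < l.choose k := by exact_mod_cast Nat.choose_pos hk.le
    have hN0 : (0 : ℝ) < l.choose (k + 1) := by exact_mod_cast Nat.choose_pos hk
    have hch : (l.choose (k + 1) : ℝ) * (k + 1) = l.choose k * ((l : ℝ) - k) := by
      have := Nat.choose_succ_right_eq l k
      have h2 : ((l.choose (k + 1) * (k + 1) : ℕ) : ℝ) = ((l.choose k * (l - k) : ℕ) : ℝ) := by rw [this]
      rw [Nat.cast_mul, Nat.cast_mul, Nat.cast_sub hk.le] at h2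
      exact_mod_cast h2
    have hc : ((l : ℝ) + 1) * l.choose k = (l + 1).choose (k + 1) * ((k : ℝ) + 1) := by
      exact_mod_cast Nat.add_one_mul_choose_eq l k
    set p := ((k : ℝ) + 1) / ((l : ℝ) + 1) with hp
    have hp0 : 0 < p := by positivity
    have hp1 : p < 1 := by rw [hp, div_lt_one (by positivity)]; linarith
    set Z := (l.choose k : ℝ) * ((l : ℝ) - k) with hZ
    have hlk : (0 : ℝ) < (l : ℝ) - k := by linarith
    have hZ0 : 0 < Z := by positivity
    set H := Real.binEntropy p with hH
    set H1 := Real.binEntropy ((k : ℝ) / l) with hH1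
    set H0 := Real.binEntropy (((k : ℝ) + 1) / l) with hH0
    have m1 : (k : ℝ) / l ∈ Set.Icc (0 : ℝ) 1 :=
      ⟨by positivity, by rw [div_le_one hl0]; linarith⟩
    have m0 : ((k : ℝ) + 1) / l ∈ Set.Icc (0 : ℝ) 1 :=
      ⟨by positivity, by rw [div_le_one hl0]; linarith⟩
    have hHn : 0 ≤ H := Real.binEntropy_nonneg hp0.le hp1.le
    have hH1n : 0 ≤ H1 := Real.binEntropy_nonneg m1.1 m1.2
    have hH0n : 0 ≤ H0 := Real.binEntropy_nonneg m0.1 m0.2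
    have conc : p * H1 + (1 - p) * H0 ≤ H := by
      have h := Real.strictConcave_binEntropy.concaveOn.2 m1 m0 hp0.le (by linarith : 0 ≤ 1 - p)
        (by ring)
      simp only [smul_eq_mul] at h
      have e : p * ((k : ℝ) / l) + (1 - p) * (((k : ℝ) + 1) / l) = p := by
        rw [hp]; field_simp; ring
      rw [e] at h
      exact h
    set Qv := QQ V (k + 1) f with hQv
    have hQ0 : 0 ≤ Qv := QQ_nonneg _ _ _
    -- bound for each `i`
    have hi : ∀ i ∈ V, EntF V (k + 1) (fun x => f x ^ 2) ≤
        p * (5 * l * H1 * (QQ (V.erase i) k (fun y => f (insert i y)) / ((l.choose k : ℝ) * k * ((l : ℝ) - k))))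
        + (1 - p) * (5 * l * H0 * (QQ (V.erase i) (k + 1) f / ((l.choose (k + 1) : ℝ) * (k + 1) * ((l : ℝ) - (k + 1)))))
        + 5 * H * ((∑ y ∈ powersetCard k (V.erase i), ∑ j ∈ V.erase i \ y,
      (f (insert i y) - f (insert j y)) ^ 2) / Z) := by
      intro i hi
      have hW : (V.erase i).card = l := by rw [card_erase_of_mem hi, hV]; rfl
      rw [ent_split hi hV hk _ p hp]
      have i1 := ih (V.erase i) hW k hk.le (fun y => f (insert i y))
      have i0 := ih (V.erase i) hW (k + 1) hk f
      push_cast at i0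
      have cp := coupling hi hV hk f
      have A0 : 0 ≤ av (V.erase i) k (fun y => f (insert i y) ^ 2) := av_nonneg _ _ _ fun _ => sq_nonneg _
      have B0 : 0 ≤ av (V.erase i) (k + 1) (fun y => f y ^ 2) := av_nonneg _ _ _ fun _ => sq_nonneg _
      have tp := two_point hp0 hp1 (Real.sqrt_nonneg (av (V.erase i) k (fun y => f (insert i y) ^ 2)))
        (Real.sqrt_nonneg (av (V.erase i) (k + 1) (fun y => f y ^ 2)))
      rw [Real.sq_sqrt A0, Real.sq_sqrt B0] at tp
      refine add_le_add (add_le_add ?_ ?_) ?_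
      · exact mul_le_mul_of_nonneg_left i1 hp0.le
      · exact mul_le_mul_of_nonneg_left i0 (by linarith)
      · exact tp.trans (mul_le_mul_of_nonneg_left cp (by positivity))
    have hsum := sum_le_sum hi
    rw [sum_const, hV, nsmul_eq_mul, sum_add_distrib, sum_add_distrib, ← mul_sum, ← mul_sum,
      ← mul_sum, ← mul_sum, ← mul_sum, ← sum_div, ← sum_div, ← sum_div, sum_QQ1, sum_R,
      sum_QQ0 V (k + 1) f (by omega), hV] at hsum
    have b1 : (k : ℝ) * QQ V (k + 1) f / ((l.choose k : ℝ) * k * ((l : ℝ) - k)) ≤ Qv / Z := by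
      rcases hk0.eq_or_lt with h | h
      · rw [← h]; simp; positivity
      · apply le_of_eq
        rw [hZ, ← hQv]; field_simp
    have b0 : (((l + 1 : ℕ) : ℝ) - ((k + 1 : ℕ) : ℝ) - 1) * QQ V (k + 1) f /
        ((l.choose (k + 1) : ℝ) * (k + 1) * ((l : ℝ) - (k + 1))) ≤ Qv / Z := by
      rw [hch, ← hQv]
      push_cast
      have e : (l : ℝ) + 1 - (k + 1) - 1 = l - (k + 1) := by ring
      rw [e]
      have : 0 ≤ (l : ℝ) - (k + 1) := by linarith
      rcases this.eq_or_lt with h | h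
      · rw [← h]; simp; positivity
      · apply le_of_eq
        field_simp
    have hR0 : 0 ≤ Qv / Z := by positivity
    have c1 : p * (5 * l * H1 * ((k : ℝ) * QQ V (k + 1) f / ((l.choose k : ℝ) * k * ((l : ℝ) - k))))
        ≤ p * (5 * l * H1 * (Qv / Z)) := by gcongr
    have c0 : (1 - p) * (5 * l * H0 * ((((l + 1 : ℕ) : ℝ) - ((k + 1 : ℕ) : ℝ) - 1) * QQ V (k + 1) f /
        ((l.choose (k + 1) : ℝ) * (k + 1) * ((l : ℝ) - (k + 1))))) ≤ (1 - p) * (5 * l * H0 * (Qv / Z)) := by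
      have : 0 ≤ 1 - p := by linarith
      gcongr
    have c2 : 5 * (Qv / Z) * l * (p * H1 + (1 - p) * H0) ≤ 5 * (Qv / Z) * l * H := by
      gcongr
    have tot : ((l : ℝ) + 1) * EntF V (k + 1) (fun x => f x ^ 2) ≤ ((l : ℝ) + 1) * (5 * H * (Qv / Z)) := by
      push_cast at hsum c0
      rw [← hQv] at hsum c1 c0
      linarith
    have fin := le_of_mul_le_mul_left tot (by positivity)
    refine fin.trans (le_of_eq ?_)
    push_cast
    rw [← hp, ← hH, ← hc]
    have e : (l : ℝ) + 1 - (k + 1) = l - k := by ring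
    rw [e, hZ]
    field_simp

end LogSob

/-! ### Spectral bound -/

section Spec

lemma orth_decomp {ι : Type*} [Fintype ι] (W : Submodule ℝ (ι → ℝ)) (f : ι → ℝ) :
    ∃ h ∈ W, ∀ w ∈ W, (f - h) ⬝ᵥ w = 0 := by
  let e := (WithLp.linearEquiv 2 ℝ (ι → ℝ))
  let K : Submodule ℝ (EuclideanSpace ℝ ι) := W.comap e.toLinearMap
  obtain ⟨y, hy, z, hz, hyz⟩ := Submodule.exists_add_mem_mem_orthogonal (K := K) (WithLp.toLp 2 f)
  refine ⟨e y, hy, ?_⟩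
  intro w hw
  have h1 : WithLp.toLp 2 w ∈ K := hw
  have h2 := (Submodule.mem_orthogonal K z).1 hz _ h1
  have h3 : z = WithLp.toLp 2 (f - e y) := by
    have : z = WithLp.toLp 2 f - y := by rw [hyz]; abel
    rw [this]; rfl
  rw [h3, EuclideanSpace.inner_toLp_toLp] at h2
  simpa using h2

lemma quad_bound {ι : Type*} [Fintype ι] (L : (ι → ℝ) →ₗ[ℝ] (ι → ℝ))
    (sym : ∀ f g, L f ⬝ᵥ g = f ⬝ᵥ L g) (W : ℕ → Submodule ℝ (ι → ℝ)) (W0 : W 0 = ⊥)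
    (mono : ∀ d, W d ≤ W (d + 1)) (c : ℕ → ℝ)
    (hc : ∀ d, ∀ f ∈ W (d + 1), L f - c d • f ∈ W d) (B : ℝ) :
    ∀ d, (∀ e < d, c e ≤ B) → ∀ f ∈ W d, L f ⬝ᵥ f ≤ B * (f ⬝ᵥ f) := by
  have inv : ∀ d, ∀ f ∈ W d, L f ∈ W d := by
    intro d f hf
    rcases d with _ | d
    · rw [W0, Submodule.mem_bot] at hf ⊢; rw [hf, map_zero]
    · have h := mono d (hc d f hf)
      have := (W (d + 1)).add_mem h ((W (d + 1)).smul_mem (c d) hf)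
      simpa using this
  intro d
  induction d with
  | zero =>
    intro _ f hf
    rw [W0, Submodule.mem_bot] at hf
    simp [hf]
  | succ d ih =>
    intro hB f hf
    obtain ⟨h, hh, ho⟩ := orth_decomp (W d) f
    obtain ⟨g, hg⟩ : ∃ g, g = f - h := ⟨_, rfl⟩
    rw [← hg] at ho
    have hgm : g ∈ W (d + 1) := hg ▸ (W (d + 1)).sub_mem hf (mono d hh)
    have hr := hc d g hgm
    have hr0 : L g - c d • g = 0 := by
      rw [← dotProduct_self_eq_zero]
      have : ∀ w ∈ W d, (L g - c d • g) ⬝ᵥ w = 0 := by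
        intro w hw
        rw [sub_dotProduct, smul_dotProduct, sym, ho _ (inv d w hw), ho _ hw]; simp
      exact this _ hr
    have hLg : L g = c d • g := sub_eq_zero.1 hr0
    have hfe : f = g + h := by rw [hg]; abel
    have i := ih (fun e he => hB e (by omega)) h hh
    have o1 := ho h hh
    have o2 : L h ⬝ᵥ g = 0 := by rw [dotProduct_comm]; exact ho _ (inv d h hh)
    have o3 : h ⬝ᵥ g = 0 := by rw [dotProduct_comm]; exact o1
    rw [hfe, map_add, hLg]
    simp only [add_dotProduct, dotProduct_add, smul_dotProduct, o1, o2, o3, smul_eq_mul]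
    have hgg : 0 ≤ g ⬝ᵥ g := by
      unfold dotProduct; exact sum_nonneg fun i _ => mul_self_nonneg _
    have := mul_le_mul_of_nonneg_right (hB d (by omega)) hgg
    linarith

variable {n : ℕ} {p : ℝ}

/-- Unnormalised Laplacian. -/
noncomputable def lapS (n : ℕ) (p : ℝ) : (SlicePoint n p → ℝ) →ₗ[ℝ] (SlicePoint n p → ℝ) where
  toFun f := fun x => ∑ i : Fin n, ∑ j : Fin n, (f x - f (permPt (Equiv.swap i j) x))
  map_add' f g := by
    ext x
    simp only [Pi.add_apply, ← sum_add_distrib]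
    refine sum_congr rfl fun i _ => sum_congr rfl fun j _ => by ring
  map_smul' a f := by
    ext x
    simp only [Pi.smul_apply, smul_eq_mul, mul_sum, RingHom.id_apply]
    refine sum_congr rfl fun i _ => sum_congr rfl fun j _ => by ring

lemma lapS_apply (f : SlicePoint n p → ℝ) (x : SlicePoint n p) :
    lapS n p f x = ∑ i : Fin n, ∑ j : Fin n, (f x - f (permPt (Equiv.swap i j) x)) := rfl

lemma permPt_inv (i j : Fin n) : Function.Involutive (permPt (p := p) (Equiv.swap i j)) := by
  intro x
  apply Subtype.ext
  funext a
  simp [permPt]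

lemma sum_perm (i j : Fin n) (F : SlicePoint n p → ℝ) :
    ∑ x, F (permPt (Equiv.swap i j) x) = ∑ x, F x :=
  Equiv.sum_comp (permPt_inv (p := p) i j).toPerm F

lemma sum_perm_mul (i j : Fin n) (f g : SlicePoint n p → ℝ) :
    ∑ x, f (permPt (Equiv.swap i j) x) * g x = ∑ x, f x * g (permPt (Equiv.swap i j) x) := by
  rw [← sum_perm i j (fun x => f x * g (permPt (Equiv.swap i j) x))]
  refine sum_congr rfl fun x _ => ?_
  rw [permPt_inv i j x]

lemma lapS_dot (f g : SlicePoint n p → ℝ) : lapS n p f ⬝ᵥ g =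
    ∑ i : Fin n, ∑ j : Fin n, (∑ x, f x * g x - ∑ x, f (permPt (Equiv.swap i j) x) * g x) := by
  unfold dotProduct
  simp only [lapS_apply, sum_mul, sub_mul]
  rw [sum_comm]
  refine sum_congr rfl fun i _ => ?_
  rw [sum_comm]
  refine sum_congr rfl fun j _ => ?_
  rw [sum_sub_distrib]

lemma lapS_symm (f g : SlicePoint n p → ℝ) : lapS n p f ⬝ᵥ g = f ⬝ᵥ lapS n p g := by
  rw [dotProduct_comm f, lapS_dot, lapS_dot]
  refine sum_congr rfl fun i _ => sum_congr rfl fun j _ => ?_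
  rw [sum_perm_mul]
  congr 1
  · exact sum_congr rfl fun x _ => mul_comm _ _
  · exact sum_congr rfl fun x _ => mul_comm _ _

lemma dirichlet_eq (f : SlicePoint n p → ℝ) :
    ∑ x, ∑ i : Fin n, ∑ j : Fin n, (f x - f (permPt (Equiv.swap i j) x)) ^ 2
      = 2 * (lapS n p f ⬝ᵥ f) := by
  rw [lapS_dot, mul_sum, sum_comm]
  refine sum_congr rfl fun i _ => ?_
  rw [mul_sum, sum_comm]
  refine sum_congr rfl fun j _ => ?_
  have h := sum_perm i j (fun x => f x ^ 2)
  have e : ∑ x, (f x - f (permPt (Equiv.swap i j) x)) ^ 2 =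
      ∑ x, f x ^ 2 + ∑ x, f (permPt (Equiv.swap i j) x) ^ 2
       - 2 * ∑ x, f (permPt (Equiv.swap i j) x) * f x := by
    rw [mul_sum, ← sum_add_distrib, ← sum_sub_distrib]
    refine sum_congr rfl fun x _ => by ring
  rw [e, h]
  have : ∑ x, f x * f x = ∑ x, f x ^ 2 := sum_congr rfl fun x _ => by ring
  rw [this]; ring

lemma coordR_perm (i j t : Fin n) (x : SlicePoint n p) :
    coordR (permPt (Equiv.swap i j) x) t = coordR x (Equiv.swap i j t) := by
  have h : (permPt (Equiv.swap i j) x).1 t = x.1 (Equiv.swap i j t) := by simp [permPt]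
  unfold coordR
  rw [h]

lemma coordR_sq (x : SlicePoint n p) (i : Fin n) : coordR x i * coordR x i = coordR x i := by
  unfold coordR; split_ifs <;> simp

lemma sum_coordR (x : SlicePoint n p) : ∑ i, coordR x i = p * n := by
  have h := x.2
  unfold coordR
  rw [Finset.sum_boole]
  exact h

lemma andT_swap_in {T : Finset (Fin n)} {i j : Fin n} (hi : i ∈ T) (hj : j ∉ T)
    (x : SlicePoint n p) :
    andT T (permPt (Equiv.swap i j) x) = andT (T.erase i) x * coordR x j := by
  unfold andT
  rw [← mul_prod_erase T _ hi, coordR_perm, Equiv.swap_apply_left, mul_comm]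
  congr 1
  refine prod_congr rfl fun t ht => ?_
  rw [coordR_perm, Equiv.swap_apply_of_ne_of_ne (ne_of_mem_erase ht)]
  rintro rfl
  exact hj (mem_of_mem_erase ht)

lemma andT_swap_out {T : Finset (Fin n)} {i j : Fin n} (hi : i ∉ T) (hj : j ∉ T)
    (x : SlicePoint n p) :
    andT T (permPt (Equiv.swap i j) x) = andT T x := by
  unfold andT
  refine prod_congr rfl fun t ht => ?_
  rw [coordR_perm, Equiv.swap_apply_of_ne_of_ne]
  · rintro rfl; exact hi ht
  · rintro rfl; exact hj ht

lemma andT_swap_both {T : Finset (Fin n)} {i j : Fin n} (hi : i ∈ T) (hj : j ∈ T)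
    (x : SlicePoint n p) :
    andT T (permPt (Equiv.swap i j) x) = andT T x := by
  unfold andT
  refine prod_bij (fun t _ => Equiv.swap i j t) ?_ ?_ ?_ ?_
  · intro t ht
    rcases Equiv.swap_apply_eq_iff (x := i) (y := j) (z := t) (w := Equiv.swap i j t) |>.1 rfl with _
    by_cases h1 : t = i
    · rw [h1, Equiv.swap_apply_left]; exact hj
    by_cases h2 : t = j
    · rw [h2, Equiv.swap_apply_right]; exact hi
    rw [Equiv.swap_apply_of_ne_of_ne h1 h2]; exact ht
  · intro a _ b _ h
    exact (Equiv.swap i j).injective h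
  · intro t ht
    refine ⟨Equiv.swap i j t, ?_, by simp⟩
    by_cases h1 : t = i
    · rw [h1, Equiv.swap_apply_left]; exact hj
    by_cases h2 : t = j
    · rw [h2, Equiv.swap_apply_right]; exact hi
    rw [Equiv.swap_apply_of_ne_of_ne h1 h2]; exact ht
  · intro t _
    exact coordR_perm i j t x

lemma lapS_andT (T : Finset (Fin n)) :
    lapS n p (andT T) = (2 * (T.card : ℝ) * ((n : ℝ) - T.card + 1)) • andT T
      - (2 * (p * n - T.card + 1)) • ∑ i ∈ T, andT (T.erase i) := by
  funext x
  rw [lapS_apply]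
  simp only [Pi.sub_apply, Pi.smul_apply, smul_eq_mul, Finset.sum_apply]
  set D : Fin n → Fin n → ℝ := fun i j => andT T x - andT T (permPt (Equiv.swap i j) x) with hD
  have h00 : ∀ i ∈ Tᶜ, ∀ j ∈ Tᶜ, D i j = 0 := by
    intro i hi j hj
    rw [hD]; simp only
    rw [andT_swap_out (mem_compl.1 hi) (mem_compl.1 hj), sub_self]
  have h11 : ∀ i ∈ T, ∀ j ∈ T, D i j = 0 := by
    intro i hi j hj
    rw [hD]; simp only
    rw [andT_swap_both hi hj, sub_self]
  have h10 : ∀ i ∈ T, ∀ j ∈ Tᶜ, D i j = andT T x - andT (T.erase i) x * coordR x j := by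
    intro i hi j hj
    rw [hD]; simp only
    rw [andT_swap_in hi (mem_compl.1 hj)]
  have hs : ∀ i j, D i j = D j i := by
    intro i j; rw [hD]; simp only; rw [Equiv.swap_comm]
  have e1 : ∑ i, ∑ j, D i j = 2 * ∑ i ∈ T, ∑ j ∈ Tᶜ, D i j := by
    rw [← sum_add_sum_compl T]
    have a1 : ∑ i ∈ T, ∑ j, D i j = ∑ i ∈ T, ∑ j ∈ Tᶜ, D i j := by
      refine sum_congr rfl fun i hi => ?_
      rw [← sum_add_sum_compl T, sum_eq_zero (h11 i hi), zero_add]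
    have a2 : ∑ i ∈ Tᶜ, ∑ j, D i j = ∑ i ∈ T, ∑ j ∈ Tᶜ, D i j := by
      rw [sum_comm (s := T)]
      refine sum_congr rfl fun i hi => ?_
      rw [← sum_add_sum_compl T, sum_eq_zero (h00 i hi), add_zero]
      exact sum_congr rfl fun j _ => hs i j
    rw [a1, a2]; ring
  have e2 : ∀ i ∈ T, ∑ j ∈ Tᶜ, D i j = ((n : ℝ) - T.card + 1) * andT T x
      - (p * n - T.card + 1) * andT (T.erase i) x := by
    intro i hi
    rw [sum_congr rfl (h10 i hi), sum_sub_distrib, sum_const, card_compl, Fintype.card_fin,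
      nsmul_eq_mul, ← mul_sum, Nat.cast_sub (by simpa using card_le_univ T)]
    have s1 : ∑ j ∈ Tᶜ, coordR x j = p * n - ∑ j ∈ T, coordR x j := by
      rw [← sum_coordR x, ← sum_add_sum_compl T (fun j => coordR x j)]; ring
    have s2 : andT (T.erase i) x * ∑ j ∈ T, coordR x j
        = andT T x + ((T.card : ℝ) - 1) * andT (T.erase i) x := by
      rw [← add_sum_erase T _ hi, mul_add]
      congr 1
      · unfold andT; rw [prod_erase_mul T _ hi]
      · rw [mul_sum]
        have : ∀ j ∈ T.erase i, andT (T.erase i) x * coordR x j = andT (T.erase i) x := by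
          intro j hj
          unfold andT
          rw [← mul_prod_erase _ _ hj]
          calc _ = (coordR x j * coordR x j) * ∏ y ∈ (T.erase i).erase j, coordR x y := by ring
            _ = _ := by rw [coordR_sq]
        rw [sum_congr rfl this, sum_const, card_erase_of_mem hi, nsmul_eq_mul,
          Nat.cast_sub (card_pos.2 ⟨i, hi⟩)]
        simp
    rw [s1, mul_sub, s2]
    ring
  rw [e1, sum_congr rfl e2, sum_sub_distrib, sum_const, nsmul_eq_mul, ← mul_sum]
  ring

lemma degLT_zero : degLT n p 0 = ⊥ := by
  unfold degLT
  simp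

lemma degLT_succ (k : ℕ) : degLT n p (k + 1) = degLE n p k := by
  unfold degLT degLE
  simp only [Nat.lt_succ_iff]

lemma andT_mem {T : Finset (Fin n)} {k : ℕ} (h : T.card < k) :
    (andT T : SlicePoint n p → ℝ) ∈ degLT n p k :=
  Submodule.subset_span ⟨T, h, rfl⟩

lemma degLT_mono (k : ℕ) : degLT n p k ≤ degLT n p (k + 1) := by
  unfold degLT
  apply Submodule.span_mono
  rintro g ⟨T, hT, rfl⟩
  exact ⟨T, by omega, rfl⟩

lemma lapS_tri (d : ℕ) (f : SlicePoint n p → ℝ) (hf : f ∈ degLT n p (d + 1)) :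
    lapS n p f - (2 * (d : ℝ) * ((n : ℝ) - d + 1)) • f ∈ degLT n p d := by
  have : degLT n p (d + 1) ≤ (degLT n p d).comap
      (lapS n p - (2 * (d : ℝ) * ((n : ℝ) - d + 1)) • LinearMap.id) := by
    conv_lhs => unfold degLT
    rw [Submodule.span_le]
    rintro g ⟨T, hT, rfl⟩
    simp only [SetLike.mem_coe, Submodule.mem_comap, LinearMap.sub_apply, LinearMap.smul_apply,
      LinearMap.id_apply]
    rw [lapS_andT, sub_right_comm]
    apply Submodule.sub_mem
    · rcases (Nat.lt_succ_iff.1 hT).eq_or_lt with h | h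
      · rw [h, sub_self]; exact Submodule.zero_mem _
      · exact Submodule.sub_mem _ (Submodule.smul_mem _ _ (andT_mem h))
          (Submodule.smul_mem _ _ (andT_mem h))
    · apply Submodule.smul_mem
      apply Submodule.sum_mem
      intro i hi
      apply andT_mem
      rw [card_erase_of_mem hi]
      have := card_pos.2 ⟨i, hi⟩
      omega
  exact this hf

lemma lapS_bound (d : ℕ) (f : SlicePoint n p → ℝ) (hf : f ∈ degLE n p d) :
    lapS n p f ⬝ᵥ f ≤ (2 * d * n) * (f ⬝ᵥ f) := by
  refine quad_bound (lapS n p) lapS_symm (degLT n p) degLT_zero degLT_mono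
    (fun d => 2 * (d : ℝ) * ((n : ℝ) - d + 1)) lapS_tri (2 * d * n) (d + 1) ?_ f
    (by rw [degLT_succ]; exact hf)
  intro e he
  have he' : (e : ℝ) ≤ d := by exact_mod_cast Nat.lt_succ_iff.1 he
  have hn : (0 : ℝ) ≤ n := Nat.cast_nonneg n
  rcases Nat.eq_zero_or_pos e with rfl | h
  · simp; positivity
  · have h1 : (1 : ℝ) ≤ e := by exact_mod_cast h
    nlinarith

lemma degLE_mul {k l : ℕ} {f g : SlicePoint n p → ℝ} (hf : f ∈ degLE n p k)
    (hg : g ∈ degLE n p l) : f * g ∈ degLE n p (k + l) := by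
  have h := Submodule.mul_mem_mul hf hg
  unfold degLE at h
  rw [Submodule.span_mul_span] at h
  refine Submodule.span_mono ?_ h
  rintro _ ⟨_, ⟨S, hS, rfl⟩, _, ⟨T, hT, rfl⟩, rfl⟩
  refine ⟨S ∪ T, (card_union_le _ _).trans (add_le_add hS hT), ?_⟩
  funext x
  simp only [Pi.mul_apply]
  unfold andT
  have key : ∀ U : Finset (Fin n), ∏ i ∈ U, coordR x i = if ∀ i ∈ U, x.1 i = true then 1 else 0 := by
    intro U
    by_cases h : ∀ i ∈ U, x.1 i = true
    · rw [if_pos h]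
      exact prod_eq_one fun i hi => by simp [coordR, h i hi]
    · rw [if_neg h]
      push Not at h
      obtain ⟨i, hi, hx⟩ := h
      exact prod_eq_zero hi (by simp [coordR, hx])
  rw [key, key, key]
  by_cases h1 : ∀ i ∈ S, x.1 i = true
  · by_cases h2 : ∀ i ∈ T, x.1 i = true
    · have h3 : ∀ i ∈ S ∪ T, x.1 i = true := by
        intro i hi
        rcases mem_union.1 hi with h | h
        exacts [h1 i h, h2 i h]
      rw [if_pos h1, if_pos h2, if_pos h3, mul_one]
    · have h3 : ¬ ∀ i ∈ S ∪ T, x.1 i = true := fun h => h2 fun i hi => h i (mem_union_right _ hi)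
      rw [if_neg h2, if_neg h3, mul_zero]
  · have h3 : ¬ ∀ i ∈ S ∪ T, x.1 i = true := fun h => h1 fun i hi => h i (mem_union_left _ hi)
    rw [if_neg h1, if_neg h3, zero_mul]

end Spec

/-! ### Transfer and conclusion -/

section Final
variable {n : ℕ} {p : ℝ}

/-- Support of a slice point. -/
def supp (x : SlicePoint n p) : Finset (Fin n) := Finset.univ.filter (fun i => x.1 i = true)

lemma mem_supp (x : SlicePoint n p) (i : Fin n) : i ∈ supp x ↔ x.1 i = true := by
  simp [supp]

lemma supp_inj {x y : SlicePoint n p} (h : supp x = supp y) : x = y := by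
  apply Subtype.ext
  funext i
  have h1 := mem_supp x i
  rw [h, mem_supp y i] at h1
  exact Bool.eq_iff_iff.2 h1.symm

/-- Extension of a function on the slice to all sets. -/
noncomputable def extS (f : SlicePoint n p → ℝ) (s : Finset (Fin n)) : ℝ :=
  if h : ∃ x : SlicePoint n p, supp x = s then f h.choose else 0

lemma extS_supp (f : SlicePoint n p → ℝ) (x : SlicePoint n p) : extS f (supp x) = f x := by
  have h : ∃ y : SlicePoint n p, supp y = supp x := ⟨x, rfl⟩
  unfold extS
  rw [dif_pos h, supp_inj h.choose_spec]

lemma sum_slice {m : ℕ} (hm : (m : ℝ) = p * n) (G : Finset (Fin n) → ℝ) :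
    ∑ s ∈ powersetCard m univ, G s = ∑ x : SlicePoint n p, G (supp x) := by
  symm
  refine sum_bij (fun x _ => supp x) ?_ ?_ ?_ ?_
  · intro x _
    rw [mem_powersetCard]
    refine ⟨subset_univ _, ?_⟩
    have h : ((supp x).card : ℝ) = p * n := x.2
    rw [← hm] at h
    exact_mod_cast h
  · intro x _ y _ h
    exact supp_inj h
  · intro s hs
    have hc := (mem_powersetCard.1 hs).2
    have e : Finset.univ.filter (fun i => (decide (i ∈ s)) = true) = s := by
      ext i; simp
    refine ⟨⟨fun i => decide (i ∈ s), ?_⟩, mem_univ _, ?_⟩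
    · rw [e, hc, hm]
    · exact e
  · intro x _; rfl

lemma card_slice {m : ℕ} (hm : (m : ℝ) = p * n) :
    (Fintype.card (SlicePoint n p) : ℝ) = n.choose m := by
  have h := sum_slice hm (fun _ => 1)
  rw [sum_const, sum_const, card_powersetCard, card_univ, card_univ, Fintype.card_fin] at h
  simpa using h.symm

lemma av_slice {m : ℕ} (hm : (m : ℝ) = p * n) (G : Finset (Fin n) → ℝ) :
    av univ m G = sExp (fun x : SlicePoint n p => G (supp x)) := by
  unfold av sExp
  rw [sum_slice hm, card_slice hm, card_univ, Fintype.card_fin]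

lemma supp_perm {x : SlicePoint n p} {i j : Fin n} (hi : i ∈ supp x) (hj : j ∉ supp x) :
    insert j ((supp x).erase i) = supp (permPt (Equiv.swap i j) x) := by
  have hij : i ≠ j := by rintro rfl; exact hj hi
  ext t
  have h : (permPt (Equiv.swap i j) x).1 t = x.1 (Equiv.swap i j t) := by simp [permPt]
  rw [mem_supp, h, mem_insert, mem_erase, ← mem_supp]
  by_cases h1 : t = i
  · subst h1
    rw [Equiv.swap_apply_left]
    simp [hij, hj]
  by_cases h2 : t = j
  · subst h2
    rw [Equiv.swap_apply_right]
    simp [hi]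
  rw [Equiv.swap_apply_of_ne_of_ne h1 h2]
  simp [h1, h2]

lemma QQ_slice {m : ℕ} (hm : (m : ℝ) = p * n) {d : ℕ} {f : SlicePoint n p → ℝ}
    (hf : f ∈ degLE n p d) : QQ univ m (extS f) ≤ 4 * d * n * ∑ x, f x ^ 2 := by
  have h1 : QQ univ m (extS f) ≤
      ∑ x, ∑ i : Fin n, ∑ j : Fin n, (f x - f (permPt (Equiv.swap i j) x)) ^ 2 := by
    unfold QQ
    rw [sum_slice hm]
    refine sum_le_sum fun x _ => ?_
    have : ∑ i ∈ supp x, ∑ j ∈ univ \ supp x, (extS f (supp x) - extS f (insert j ((supp x).erase i))) ^ 2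
        = ∑ i ∈ supp x, ∑ j ∈ univ \ supp x, (f x - f (permPt (Equiv.swap i j) x)) ^ 2 := by
      refine sum_congr rfl fun i hi => sum_congr rfl fun j hj => ?_
      rw [supp_perm hi (mem_sdiff.1 hj).2, extS_supp, extS_supp]
    rw [this]
    calc _ ≤ ∑ i ∈ supp x, ∑ j : Fin n, (f x - f (permPt (Equiv.swap i j) x)) ^ 2 := by
          refine sum_le_sum fun i _ => ?_
          exact sum_le_sum_of_subset_of_nonneg (subset_univ _) fun _ _ _ => sq_nonneg _
      _ ≤ _ := sum_le_sum_of_subset_of_nonneg (subset_univ _) fun _ _ _ =>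
          sum_nonneg fun _ _ => sq_nonneg _
  rw [dirichlet_eq] at h1
  have h2 := lapS_bound d f hf
  have h3 : f ⬝ᵥ f = ∑ x, f x ^ 2 := sum_congr rfl fun x _ => by ring
  rw [h3] at h2
  linarith

lemma sExp_mono {f g : SlicePoint n p → ℝ} (h : ∀ x, f x ≤ g x) : sExp f ≤ sExp g := by
  unfold sExp
  exact div_le_div_of_nonneg_right (sum_le_sum fun x _ => h x) (Nat.cast_nonneg _)

lemma sExp_nonneg {f : SlicePoint n p → ℝ} (h : ∀ x, 0 ≤ f x) : 0 ≤ sExp f := by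
  unfold sExp
  exact div_nonneg (sum_nonneg fun x _ => h x) (Nat.cast_nonneg _)

lemma sExp_lin (a b : ℝ) (f g : SlicePoint n p → ℝ) :
    sExp (fun x => a * f x + b * g x) = a * sExp f + b * sExp g := by
  unfold sExp
  rw [sum_add_distrib, ← mul_sum, ← mul_sum]; ring

/-- Entropy bound implies the `L¹`-`L²` comparison. -/
lemma L1_of_ent (g : SlicePoint n p → ℝ) (K : ℝ)
    (h : sExp (fun x => Phi (g x ^ 2)) - Phi (sExp (fun x => g x ^ 2)) ≤ K * sExp (fun x => g x ^ 2)) :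
    sExp (fun x => g x ^ 2) ≤ Real.exp K * sExp (fun x => |g x|) ^ 2 := by
  set N := sExp (fun x => g x ^ 2) with hN
  have hN0 : 0 ≤ N := sExp_nonneg fun x => sq_nonneg _
  rcases hN0.eq_or_lt with h0 | hNp
  · rw [← h0]; positivity
  set s := Real.exp (-(Real.log N / 2) - K / 2) with hs
  have hsp : 0 < s := Real.exp_pos _
  have hls : Real.log s = -(Real.log N / 2) - K / 2 := by rw [hs, Real.log_exp]
  have hpt : ∀ x, (s * (1 - Real.log s)) * (g x ^ 2) + (-(s / 2)) * Phi (g x ^ 2) ≤ |g x| := by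
    intro x
    by_cases hg : g x = 0
    · simp [hg, Phi]
    have ha : 0 < |g x| := abs_pos.2 hg
    have hl := Real.log_le_sub_one_of_pos (x := (|g x| * s)⁻¹) (by positivity)
    rw [Real.log_inv, Real.log_mul ha.ne' hsp.ne'] at hl
    have h2 : Real.log (g x ^ 2) = 2 * Real.log |g x| := by
      rw [← sq_abs, Real.log_pow]; push_cast; ring
    have h3 := mul_le_mul_of_nonneg_left hl (show 0 ≤ s * |g x| ^ 2 by positivity)
    have h4 : s * |g x| ^ 2 * ((|g x| * s)⁻¹ - 1) = |g x| - s * |g x| ^ 2 := by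
      field_simp
    rw [h4] at h3
    rw [Phi, h2, ← sq_abs (g x)]
    linarith
  have hE := sExp_mono hpt
  rw [sExp_lin, ← hN] at hE
  have hlow : s * N ≤ sExp (fun x => |g x|) := by
    refine le_trans ?_ hE
    rw [hls]
    unfold Phi at h ⊢
    have h' := mul_le_mul_of_nonneg_left h (show 0 ≤ s / 2 by positivity)
    nlinarith
  have hsq : (s * N) ^ 2 ≤ sExp (fun x => |g x|) ^ 2 := by gcongr
  have e : Real.exp K * (s * N) ^ 2 = N := by
    have : s ^ 2 = N⁻¹ * Real.exp (-K) := by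
      rw [hs, ← Real.exp_nat_mul]
      have : ((2 : ℕ) : ℝ) * (-(Real.log N / 2) - K / 2) = - Real.log N + -K := by push_cast; ring
      rw [this, Real.exp_add, Real.exp_neg (Real.log N), Real.exp_log hNp]
    rw [mul_pow, this, Real.exp_neg]
    field_simp
  calc N = Real.exp K * (s * N) ^ 2 := e.symm
    _ ≤ _ := by gcongr

lemma binEntropy_le {p : ℝ} (hp : 0 < p) (hp2 : p ≤ 1 / 2) :
    Real.binEntropy p ≤ 5 * (p * (1 - p)) * (-Real.log p) := by
  rw [Real.binEntropy, Real.log_inv, Real.log_inv]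
  have hq : 0 < 1 - p := by linarith
  have hX : 0.69 ≤ -Real.log p := by
    have h1 : Real.log p ≤ Real.log (1 / 2) := Real.log_le_log hp hp2
    rw [one_div, Real.log_inv] at h1
    have := Real.log_two_gt_d9
    linarith
  have hY : -Real.log (1 - p) ≤ p / (1 - p) := by
    have h := Real.log_le_sub_one_of_pos (x := (1 - p)⁻¹) (by positivity)
    rw [Real.log_inv] at h
    have : (1 - p)⁻¹ - 1 = p / (1 - p) := by field_simp; ring
    linarith
  have hY2 : (1 - p) * -Real.log (1 - p) ≤ p := by
    have := mul_le_mul_of_nonneg_left hY hq.le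
    have e : (1 - p) * (p / (1 - p)) = p := by field_simp
    linarith
  have h3 : 1 ≤ 1.5 * -Real.log p := by linarith
  have h4 : p ≤ p * (1.5 * -Real.log p) := le_mul_of_one_le_right hp.le h3
  have h5 : 0 ≤ p * -Real.log p := mul_nonneg hp.le (by linarith)
  have h6 : 2.5 * (p * -Real.log p) ≤ (5 * (1 - p)) * (p * -Real.log p) := by
    apply mul_le_mul_of_nonneg_right _ h5; linarith
  linarith

lemma L1L2 {m : ℕ} (hm : (m : ℝ) = p * n) (hp : 0 < p) (hp2 : p ≤ 1 / 2) {d : ℕ}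
    {f : SlicePoint n p → ℝ} (hf : f ∈ degLE n p d) :
    sExp (fun x => f x ^ 2) ≤ p ^ (-(100 * d : ℝ)) * sExp (fun x => |f x|) ^ 2 := by
  have hK : p ^ (-(100 * d : ℝ)) = Real.exp (100 * d * (-Real.log p)) := by
    rw [Real.rpow_def_of_pos hp]; congr 1; ring
  rw [hK]
  apply L1_of_ent
  have hn0 : (0 : ℝ) ≤ n := Nat.cast_nonneg n
  have hmn : m ≤ n := by
    have : (m : ℝ) ≤ n := by rw [hm]; nlinarith
    exact_mod_cast this
  have hls := logSob n (univ : Finset (Fin n)) (by simp) m hmn (extS f)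
  unfold EntF at hls
  rw [av_slice hm, av_slice hm] at hls
  simp only [extS_supp] at hls
  refine hls.trans ?_
  have hlog : 0 ≤ -Real.log p := by
    have := Real.log_nonpos hp.le (by linarith); linarith
  have hN0 : 0 ≤ sExp (fun x => f x ^ 2) := sExp_nonneg fun x => sq_nonneg _
  rcases hn0.eq_or_lt with h0 | hn
  · rw [← h0]; simp only [mul_zero, zero_mul]; positivity
  have hmp : (m : ℝ) / n = p := by rw [hm]; field_simp
  rw [hmp]
  have hc : (0 : ℝ) < n.choose m := by exact_mod_cast Nat.choose_pos hmn
  have hQ := QQ_slice hm hf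
  have hS : ∑ x, f x ^ 2 = n.choose m * sExp (fun x => f x ^ 2) := by
    unfold sExp; rw [card_slice hm]; field_simp
  rw [hS] at hQ
  set E := sExp (fun x => f x ^ 2)
  have hq : 0 < 1 - p := by linarith
  have hH := binEntropy_le hp hp2
  have hH0 : 0 ≤ Real.binEntropy p := Real.binEntropy_nonneg hp.le (by linarith)
  have hden : (n.choose m : ℝ) * m * ((n : ℝ) - m) = n.choose m * (n ^ 2 * (p * (1 - p))) := by
    rw [hm]; ring
  rw [hden]
  calc 5 * n * Real.binEntropy p * (QQ univ m (extS f) / (n.choose m * (n ^ 2 * (p * (1 - p)))))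
      ≤ 5 * n * (5 * (p * (1 - p)) * (-Real.log p)) *
        ((4 * d * n * (n.choose m * E)) / (n.choose m * (n ^ 2 * (p * (1 - p))))) := by
        have := QQ_nonneg (univ : Finset (Fin n)) m (extS f)
        gcongr
    _ = 100 * d * (-Real.log p) * E := by
        field_simp
        ring

end Final

end SliceLS

/-- **Hypercontractivity on the slice.** There is a universal constant `C > 0` such that
every degree-`k` function `f` on `S(n,p)` (with `0 < p ≤ 1/2`, `p n ∈ ℤ`) satisfies
`E[f^8] ≤ p^{-C k} (E[f^2])^4`. -/
theorem bonami_slice :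
    ∃ C : ℝ, 0 < C ∧
      ∀ (n : ℕ) (p : ℝ), 0 < p → p ≤ 1 / 2 → (∃ m : ℤ, (m : ℝ) = p * n) →
        ∀ (k : ℕ) (f : SlicePoint n p → ℝ), f ∈ degLE n p k →
          sExp (fun x => f x ^ 8) ≤ p ^ (-(C * k)) * sExp (fun x => f x ^ 2) ^ 4 := by
  refine ⟨800, by norm_num, ?_⟩
  rintro n p hp hp2 ⟨m', hm'⟩ k f hf
  have hpn : 0 ≤ p * n := by positivity
  have hm0 : 0 ≤ m' := by
    have : (0 : ℝ) ≤ m' := by rw [hm']; exact hpn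
    exact_mod_cast this
  obtain ⟨m, rfl⟩ := Int.eq_ofNat_of_zero_le hm0
  have hm : (m : ℝ) = p * n := by rw [← hm']; simp
  have h2 : f * f ∈ degLE n p (k + k) := SliceLS.degLE_mul hf hf
  have h4 : (f * f) * (f * f) ∈ degLE n p (k + k + (k + k)) := SliceLS.degLE_mul h2 h2
  have i2 := SliceLS.L1L2 hm hp hp2 h2
  have i4 := SliceLS.L1L2 hm hp hp2 h4
  have e8 : (fun x => ((f * f) * (f * f)) x ^ 2) = fun x => f x ^ 8 := by
    funext x; simp only [Pi.mul_apply]; ring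
  have e4 : (fun x => |((f * f) * (f * f)) x|) = fun x => f x ^ 4 := by
    funext x; simp only [Pi.mul_apply]
    rw [abs_of_nonneg (mul_self_nonneg _)]; ring
  have e4' : (fun x => (f * f) x ^ 2) = fun x => f x ^ 4 := by
    funext x; simp only [Pi.mul_apply]; ring
  have e2 : (fun x => |(f * f) x|) = fun x => f x ^ 2 := by
    funext x; simp only [Pi.mul_apply]
    rw [abs_of_nonneg (mul_self_nonneg _)]; ring
  rw [e8, e4] at i4
  rw [e4', e2] at i2
  have n4 : 0 ≤ sExp (fun x => f x ^ 4) := SliceLS.sExp_nonneg fun x => by positivity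
  have hpow : p ^ (-(100 * ((k + k + (k + k) : ℕ) : ℝ))) * (p ^ (-(100 * ((k + k : ℕ) : ℝ)))) ^ 2
      = p ^ (-(800 * (k : ℝ))) := by
    rw [← Real.rpow_natCast (p ^ _) 2, ← Real.rpow_mul hp.le, ← Real.rpow_add hp]
    congr 1; push_cast; ring
  calc sExp (fun x => f x ^ 8)
      ≤ p ^ (-(100 * ((k + k + (k + k) : ℕ) : ℝ))) * sExp (fun x => f x ^ 4) ^ 2 := i4
    _ ≤ p ^ (-(100 * ((k + k + (k + k) : ℕ) : ℝ))) *
        (p ^ (-(100 * ((k + k : ℕ) : ℝ))) * sExp (fun x => f x ^ 2) ^ 2) ^ 2 := by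
        gcongr
    _ = p ^ (-(800 * (k : ℝ))) * sExp (fun x => f x ^ 2) ^ 4 := by
        rw [← hpow]; ring
end

section
/- Let f : S(n,p) → ℝ and k ≥ 1, and suppose that ‖D_{P'} f‖₂ ≤ ε for every shifted sorted k-tuple P'. Then: (1) for every k-tuple P, ‖D_P f‖₂ ≤ 2^{10k²} ε; (2) if moreover every k-tuple P satisfies either ‖D_P f‖₂ ≤ ε or ‖D_P f‖₂ > 3ε, then every k-tuple P satisfies ‖D_P f‖₂ ≤ ε. -/
open Finset
open scoped Classical

variable {n : ℕ} {p : ℝ}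

/-! ### Norm facts -/

lemma sNorm_eq_aux (f : SlicePoint n p → ℝ) :
    sNorm f = ‖(WithLp.toLp 2 f : EuclideanSpace ℝ (SlicePoint n p))‖ /
      Real.sqrt (Fintype.card (SlicePoint n p) : ℝ) := by
  rw [EuclideanSpace.norm_eq, sNorm, sNormSq, sInner, sExp, Real.sqrt_div]
  · congr 2
    apply Finset.sum_congr rfl
    intro x _
    simp [sq]
  · exact Finset.sum_nonneg (fun x _ => mul_self_nonneg _)

lemma sNorm_nonneg_aux (f : SlicePoint n p → ℝ) : 0 ≤ sNorm f := Real.sqrt_nonneg _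

lemma sNorm_add_le_aux (f g : SlicePoint n p → ℝ) :
    sNorm (f + g) ≤ sNorm f + sNorm g := by
  rw [sNorm_eq_aux, sNorm_eq_aux, sNorm_eq_aux, ← add_div]
  gcongr
  rw [WithLp.toLp_add]
  exact norm_add_le _ _

lemma permPt_permPt_aux (π σ : Equiv.Perm (Fin n)) (x : SlicePoint n p) :
    permPt π (permPt σ x) = permPt (π * σ) x := by
  apply Subtype.ext
  funext i
  rfl

lemma permPt_one_aux (x : SlicePoint n p) : permPt 1 x = x := rfl

def permEquivAux (π : Equiv.Perm (Fin n)) : SlicePoint n p ≃ SlicePoint n p where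
  toFun := permPt π
  invFun := permPt π⁻¹
  left_inv x := by rw [permPt_permPt_aux]; simp [permPt_one_aux]
  right_inv x := by rw [permPt_permPt_aux]; simp [permPt_one_aux]

lemma sNorm_perm_aux (π : Equiv.Perm (Fin n)) (f : SlicePoint n p → ℝ) :
    sNorm (fun x => f (permPt π x)) = sNorm f := by
  unfold sNorm sNormSq sInner sExp
  congr 2
  exact Equiv.sum_comp (permEquivAux π) (fun x => f x * f x)

/-! ### Operator identities -/

lemma Dij_comm_aux (i j : Fin n) (f : SlicePoint n p → ℝ) : Dij i j f = Dij j i f := by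
  unfold Dij
  rw [Equiv.swap_comm]

lemma Dij_Dij_aux (a b c d : Fin n) (hac : a ≠ c) (had : a ≠ d) (hbc : b ≠ c) (hbd : b ≠ d)
    (f : SlicePoint n p → ℝ) : Dij a b (Dij c d f) = Dij c d (Dij a b f) := by
  funext x
  have hc : Equiv.swap a b * Equiv.swap c d = Equiv.swap c d * Equiv.swap a b := by
    ext i
    simp only [Equiv.Perm.mul_apply, Equiv.swap_apply_def]
    grind
  simp only [Dij, permPt_permPt_aux, hc]
  ring

/-- extension of a function on the slice to the whole cube by zero -/
noncomputable def extG (g : SlicePoint n p → ℝ) (v : Fin n → Bool) : ℝ :=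
  if h : ((Finset.univ.filter (fun i => v i = true)).card : ℝ) = p * n then g ⟨v, h⟩ else 0

lemma extG_eq (g : SlicePoint n p → ℝ) (x : SlicePoint n p) : g x = extG g x.1 := by
  unfold extG
  rw [dif_pos x.2]

/-- exchange two coordinates of a vector -/
def csw (i j : Fin n) (v : Fin n → Bool) : Fin n → Bool := fun t => v (Equiv.swap i j t)

lemma permPt_val_aux (i j : Fin n) (x : SlicePoint n p) :
    (permPt (Equiv.swap i j) x).1 = csw i j x.1 := rfl

/-- overwrite four coordinates -/
def up4 (w x y z : Fin n) (v : Fin n → Bool) (a b c d : Bool) : Fin n → Bool :=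
  fun i => if i = w then a else if i = x then b else if i = y then c else if i = z then d else v i

lemma up4_self (w x y z : Fin n) (v : Fin n → Bool) :
    v = up4 w x y z v (v w) (v x) (v y) (v z) := by
  funext i; unfold up4; grind

lemma four_identity (w x y z : Fin n) (hwx : w ≠ x) (hwy : w ≠ y) (hwz : w ≠ z)
    (hxy : x ≠ y) (hxz : x ≠ z) (hyz : y ≠ z) (g : SlicePoint n p → ℝ) :
    Dij w z (Dij x y g) =
      (fun u => Dij w y (Dij x z g) (permPt (Equiv.swap y z) u)) +
      (fun u => Dij w x (Dij y z g) (permPt (Equiv.swap x z) u)) := by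
  funext u
  simp only [Dij, Pi.add_apply]
  simp only [extG_eq g, permPt_val_aux]
  generalize u.1 = v
  have h0 := up4_self w x y z v
  generalize v w = a at h0
  generalize v x = b at h0
  generalize v y = c at h0
  generalize v z = d at h0
  have swx : ∀ a b c d, csw w x (up4 w x y z v a b c d)
      = up4 w x y z v b a c d := by
    intros; funext t; simp only [csw, up4, Equiv.swap_apply_def]; grind
  have swy : ∀ a b c d, csw w y (up4 w x y z v a b c d)
      = up4 w x y z v c b a d := by
    intros; funext t; simp only [csw, up4, Equiv.swap_apply_def]; grind
  have swz : ∀ a b c d, csw w z (up4 w x y z v a b c d)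
      = up4 w x y z v d b c a := by
    intros; funext t; simp only [csw, up4, Equiv.swap_apply_def]; grind
  have sxy : ∀ a b c d, csw x y (up4 w x y z v a b c d)
      = up4 w x y z v a c b d := by
    intros; funext t; simp only [csw, up4, Equiv.swap_apply_def]; grind
  have sxz : ∀ a b c d, csw x z (up4 w x y z v a b c d)
      = up4 w x y z v a d c b := by
    intros; funext t; simp only [csw, up4, Equiv.swap_apply_def]; grind
  have syz : ∀ a b c d, csw y z (up4 w x y z v a b c d)
      = up4 w x y z v a b d c := by
    intros; funext t; simp only [csw, up4, Equiv.swap_apply_def]; grind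
  generalize hU : up4 w x y z v = U at *
  rw [h0]
  simp only [swx, swy, swz, sxy, sxz, syz]
  cases a <;> cases b <;> cases c <;> cases d <;> ring

lemma three_identity (a b c : Fin n) (hab : a ≠ b) (hac : a ≠ c) (hbc : b ≠ c)
    (g : SlicePoint n p → ℝ) :
    Dij a b g = (fun u => Dij a c g (permPt (Equiv.swap b c) u)) +
      (fun u => Dij b c g (permPt (Equiv.swap a c) u)) := by
  funext u
  simp only [Dij, Pi.add_apply]
  simp only [extG_eq g, permPt_val_aux]
  generalize u.1 = v
  have h0 := up4_self a b c c v
  generalize v a = a' at h0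
  generalize v b = b' at h0
  generalize v c = c' at h0
  have sab : ∀ p q r s, csw a b (up4 a b c c v p q r s)
      = up4 a b c c v q p r s := by
    intros; funext t; simp only [csw, up4, Equiv.swap_apply_def]; grind
  have sac : ∀ p q r s, csw a c (up4 a b c c v p q r s)
      = up4 a b c c v r q p s := by
    intros; funext t; simp only [csw, up4, Equiv.swap_apply_def]; grind
  have sbc : ∀ p q r s, csw b c (up4 a b c c v p q r s)
      = up4 a b c c v p r q s := by
    intros; funext t; simp only [csw, up4, Equiv.swap_apply_def]; grind
  generalize hU : up4 a b c c v = U at *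
  rw [h0]
  simp only [sab, sac, sbc]
  cases a' <;> cases b' <;> cases c' <;> ring

/-! ### Tuples -/

/-- the entries of `P` -/
noncomputable def entries {n : ℕ} (P : Finset (Fin n × Fin n)) : Finset (Fin n) :=
  P.image Prod.fst ∪ P.image Prod.snd

lemma mem_entries {n : ℕ} (P : Finset (Fin n × Fin n)) (a : Fin n) :
    a ∈ entries P ↔ ∃ r ∈ P, r.1 = a ∨ r.2 = a := by
  unfold entries
  simp only [Finset.mem_union, Finset.mem_image]
  grind

lemma entries_insert {n : ℕ} (q : Fin n × Fin n) (R : Finset (Fin n × Fin n)) (a : Fin n) :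
    a ∈ entries (insert q R) ↔ a = q.1 ∨ a = q.2 ∨ a ∈ entries R := by
  simp only [mem_entries, Finset.mem_insert]
  grind

lemma card_entries {n : ℕ} (P : Finset (Fin n × Fin n)) : (entries P).card ≤ 2 * P.card := by
  unfold entries
  have h1 := Finset.card_union_le (P.image Prod.fst) (P.image Prod.snd)
  have h2 : (P.image Prod.fst).card ≤ P.card := Finset.card_image_le
  have h3 : (P.image Prod.snd).card ≤ P.card := Finset.card_image_le
  omega

lemma tuple_insert {n k : ℕ} {q : Fin n × Fin n} {R : Finset (Fin n × Fin n)}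
    (hR : IsTuple k R) (hq : q.1 < q.2) (h1 : q.1 ∉ entries R) (h2 : q.2 ∉ entries R) :
    q ∉ R ∧ IsTuple (k + 1) (insert q R) := by
  rw [mem_entries] at h1 h2
  push Not at h1 h2
  have hn : q ∉ R := fun hm => (h1 q hm).1 rfl
  refine ⟨hn, ?_, ?_, ?_⟩
  · rw [Finset.card_insert_of_notMem hn, hR.1]
  · intro r hr
    rcases Finset.mem_insert.1 hr with rfl | hr
    · exact hq
    · exact hR.2.1 r hr
  · intro r hr s hs hrs
    rcases Finset.mem_insert.1 hr with rfl | hr' <;>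
      rcases Finset.mem_insert.1 hs with rfl | hs'
    · exact absurd rfl hrs
    · have := h1 s hs'; have := h2 s hs'; grind
    · have := h1 r hr'; have := h2 r hr'; grind
    · exact hR.2.2 r hr' s hs' hrs

lemma tuple_erase {n k : ℕ} {q : Fin n × Fin n} {P : Finset (Fin n × Fin n)}
    (hP : IsTuple (k + 1) P) (hq : q ∈ P) :
    IsTuple k (P.erase q) ∧ q.1 < q.2 ∧ q.1 ∉ entries (P.erase q) ∧
      q.2 ∉ entries (P.erase q) := by
  refine ⟨⟨?_, ?_, ?_⟩, hP.2.1 q hq, ?_, ?_⟩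
  · rw [Finset.card_erase_of_mem hq, hP.1]; rfl
  · intro r hr; exact hP.2.1 r (Finset.mem_of_mem_erase hr)
  · intro r hr s hs
    exact hP.2.2 r (Finset.mem_of_mem_erase hr) s (Finset.mem_of_mem_erase hs)
  · rw [mem_entries]
    rintro ⟨r, hr, h⟩
    have := hP.2.2 q hq r (Finset.mem_of_mem_erase hr) (Finset.ne_of_mem_erase hr).symm
    grind
  · rw [mem_entries]
    rintro ⟨r, hr, h⟩
    have := hP.2.2 q hq r (Finset.mem_of_mem_erase hr) (Finset.ne_of_mem_erase hr).symm
    grind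

lemma DP_insert {k : ℕ} {q : Fin n × Fin n} {R : Finset (Fin n × Fin n)}
    (hq : q ∉ R) (hT : IsTuple k (insert q R)) (f : SlicePoint n p → ℝ) :
    DP (insert q R) f = Dij q.1 q.2 (DP R f) := by
  unfold DP
  have hperm := Finset.toList_insert hq
  have := List.Perm.foldr_eq' (f := fun (q : Fin n × Fin n) (g : SlicePoint n p → ℝ) =>
    Dij q.1 q.2 g) hperm (by
      intro r hr s hs g
      rw [Finset.mem_toList] at hr hs
      by_cases hrs : r = s
      · rw [hrs]
      · obtain ⟨h1, h2, h3, h4⟩ := hT.2.2 r hr s hs hrs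
        exact (Dij_Dij_aux _ _ _ _ h1.symm h3.symm h2.symm h4.symm g)) f
  rw [this]
  rfl

/-! ### Potential -/

/-- 2 for a nesting (`r` inside `q`), 1 for a crossing -/
def wt {n : ℕ} (q r : Fin n × Fin n) : ℕ :=
  if q.1.val < r.1.val ∧ r.1.val < q.2.val then (if r.2.val < q.2.val then 2 else 1) else 0

noncomputable def Wpot {n : ℕ} (P : Finset (Fin n × Fin n)) : ℕ := ∑ q ∈ P, ∑ r ∈ P, wt q r

lemma wt_self {n : ℕ} (q : Fin n × Fin n) : wt q q = 0 := by simp [wt]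

lemma wt_pair {n : ℕ} (q r : Fin n × Fin n) : wt q r + wt r q ≤ 2 := by
  unfold wt; split_ifs <;> omega

lemma Wpot_insert {n : ℕ} {q : Fin n × Fin n} {R : Finset (Fin n × Fin n)} (hq : q ∉ R) :
    Wpot (insert q R) = Wpot R + ∑ r ∈ R, (wt q r + wt r q) := by
  unfold Wpot
  rw [Finset.sum_insert hq, Finset.sum_insert hq, wt_self, Finset.sum_add_distrib]
  have : ∀ x ∈ R, ∑ r ∈ insert q R, wt x r = wt x q + ∑ r ∈ R, wt x r :=
    fun x _ => Finset.sum_insert hq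
  rw [Finset.sum_congr rfl this, Finset.sum_add_distrib]
  omega

lemma Wpot_le {n : ℕ} (P : Finset (Fin n × Fin n)) : Wpot P ≤ 2 * P.card ^ 2 := by
  unfold Wpot
  calc ∑ q ∈ P, ∑ r ∈ P, wt q r ≤ ∑ q ∈ P, ∑ r ∈ P, 2 := by
        refine Finset.sum_le_sum (fun q _ => Finset.sum_le_sum (fun r _ => ?_))
        have := wt_pair q r
        omega
    _ = 2 * P.card ^ 2 := by simp; ring

/-- number of `j < 2k` such that `[0..j]` is not contained in the entries -/
noncomputable def mpot {n : ℕ} (k : ℕ) (P : Finset (Fin n × Fin n)) : ℕ :=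
  ((Finset.range (2 * k)).filter (fun j => ¬ ∀ i : Fin n, i.val ≤ j → i ∈ entries P)).card

noncomputable def Mpot {n : ℕ} (k : ℕ) (P : Finset (Fin n × Fin n)) : ℕ :=
  Wpot P + 2 * k * mpot k P

lemma Mpot_le {n k : ℕ} (P : Finset (Fin n × Fin n)) (hP : IsTuple k P) :
    Mpot k P ≤ 10 * k ^ 2 := by
  have h1 := Wpot_le P
  rw [hP.1] at h1
  have h2 : mpot k P ≤ 2 * k := by
    unfold mpot
    exact (Finset.card_filter_le _ _).trans (by simp)
  unfold Mpot
  nlinarith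

lemma third_pair {n : ℕ} (w x y z : Fin n) (r : Fin n × Fin n) (hr : r.1 < r.2)
    (hwx : w < x) (hxy : x < y) (hyz : y < z)
    (h1 : w ≠ r.1) (h2 : x ≠ r.1) (h3 : y ≠ r.1) (h4 : z ≠ r.1)
    (h5 : w ≠ r.2) (h6 : x ≠ r.2) (h7 : y ≠ r.2) (h8 : z ≠ r.2) :
    (wt (w, y) r + wt r (w, y) + (wt (x, z) r + wt r (x, z)) ≤
      wt (w, z) r + wt r (w, z) + (wt (x, y) r + wt r (x, y))) ∧
    (wt (w, x) r + wt r (w, x) + (wt (y, z) r + wt r (y, z)) ≤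
      wt (w, z) r + wt r (w, z) + (wt (x, y) r + wt r (x, y))) := by
  obtain ⟨s, t⟩ := r
  simp only [ne_eq, Fin.ext_iff, Fin.lt_def] at *
  simp only [wt]
  generalize w.val = w at *
  generalize x.val = x at *
  generalize y.val = y at *
  generalize z.val = z at *
  generalize s.val = s at *
  generalize t.val = t at *
  have hs : s < w ∨ (w < s ∧ s < x) ∨ (x < s ∧ s < y) ∨ (y < s ∧ s < z) ∨ z < s := by omega
  have ht : t < w ∨ (w < t ∧ t < x) ∨ (x < t ∧ t < y) ∨ (y < t ∧ t < z) ∨ z < t := by omega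
  rcases hs with hs | hs | hs | hs | hs <;> rcases ht with ht | ht | ht | ht | ht <;>
    first
    | (exfalso; omega)
    | (simp (disch := omega) only [if_pos, if_neg]; omega)

/-! ### The two reduction steps -/

lemma self_pairs {n : ℕ} (w x y z : Fin n) (hwx : w < x) (hxy : x < y) (hyz : y < z) :
    wt (w, z) (x, y) + wt (x, y) (w, z) = 2 ∧ wt (w, y) (x, z) + wt (x, z) (w, y) = 1 ∧
      wt (w, x) (y, z) + wt (y, z) (w, x) = 0 := by
  simp only [Fin.lt_def] at *
  refine ⟨?_, ?_, ?_⟩ <;> simp (disch := omega) only [wt, if_pos, if_neg]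

lemma entries_re {n : ℕ} (w x y z : Fin n) (R : Finset (Fin n × Fin n)) :
    entries (insert (w, y) (insert (x, z) R)) = entries (insert (w, z) (insert (x, y) R)) ∧
    entries (insert (w, x) (insert (y, z) R)) = entries (insert (w, z) (insert (x, y) R)) := by
  constructor <;> ext i <;> simp only [entries_insert] <;> tauto

set_option maxHeartbeats 1000000 in
lemma sort_step {k : ℕ} {P : Finset (Fin n × Fin n)} (hP : IsTuple k P) (hs : ¬ IsSorted P) :
    ∃ P1 P2, IsTuple k P1 ∧ IsTuple k P2 ∧ Mpot k P1 < Mpot k P ∧ Mpot k P2 < Mpot k P ∧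
      ∀ f : SlicePoint n p → ℝ, sNorm (DP P f) ≤ sNorm (DP P1 f) + sNorm (DP P2 f) := by
  obtain ⟨q, hq, r, hr, hqr1, hqr2⟩ : ∃ q ∈ P, ∃ r ∈ P, q.1 < r.1 ∧ r.2 < q.2 := by
    unfold IsSorted at hs
    push Not at hs
    obtain ⟨q, hq, r, hr, h⟩ := hs
    have hne : q ≠ r := by rintro rfl; simp at h
    have hd := hP.2.2 q hq r hr hne
    rcases h with ⟨h1, h2⟩ | ⟨h1, h2⟩
    · exact ⟨q, hq, r, hr, h1, lt_of_le_of_ne h2 hd.2.2.2.symm⟩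
    · exact ⟨r, hr, q, hq, lt_of_le_of_ne h1 hd.1.symm, h2⟩
  have hne : q ≠ r := by rintro rfl; simp at hqr1
  obtain ⟨k', rfl⟩ : ∃ k', k = k' + 2 := by
    have : 1 < P.card := Finset.one_lt_card.2 ⟨q, hq, r, hr, hne⟩
    rw [hP.1] at this
    exact ⟨k - 2, by omega⟩
  obtain ⟨hPq, hqlt, hq1, hq2⟩ := tuple_erase hP hq
  have hr' : r ∈ P.erase q := Finset.mem_erase.2 ⟨hne.symm, hr⟩
  obtain ⟨hR, hrlt, hr1, hr2⟩ := tuple_erase hPq hr'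
  have e2 : P.erase q = insert r ((P.erase q).erase r) := (Finset.insert_erase hr').symm
  have e1 : P = insert q (insert r ((P.erase q).erase r)) := by
    rw [← e2, Finset.insert_erase hq]
  rw [e2, entries_insert] at hq1 hq2
  generalize (P.erase q).erase r = R at *
  obtain ⟨w, z⟩ := q
  obtain ⟨x, y⟩ := r
  simp only [not_or] at *
  obtain ⟨hwx', hwy', hwR⟩ := hq1
  obtain ⟨hzx', hzy', hzR⟩ := hq2
  have hwy : w < y := hqr1.trans hrlt
  have hxz : x < z := hrlt.trans hqr2
  -- generic construction of inserted pairs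
  obtain ⟨nA, tA⟩ := tuple_insert (q := (x, y)) hR hrlt hr1 hr2
  obtain ⟨nB, tB⟩ := tuple_insert (q := (w, z)) tA hqlt
    (by simp [entries_insert, *]) (by simp [entries_insert, *])
  obtain ⟨nC, tC⟩ := tuple_insert (q := (x, z)) hR hxz hr1 hzR
  obtain ⟨nD, tD⟩ := tuple_insert (q := (w, y)) tC hwy
    (by simp only [entries_insert]; grind) (by simp only [entries_insert]; grind)
  obtain ⟨nE, tE⟩ := tuple_insert (q := (y, z)) hR hqr2 hr2 hzR
  obtain ⟨nF, tF⟩ := tuple_insert (q := (w, x)) tE hqr1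
    (by simp only [entries_insert]; grind) (by simp only [entries_insert]; grind)
  have hthird : ∀ r ∈ R, _ := fun r hrR => third_pair w x y z r (hR.2.1 r hrR) hqr1 hrlt hqr2
    (fun h => hwR ((mem_entries _ _).2 ⟨r, hrR, Or.inl h.symm⟩))
    (fun h => hr1 ((mem_entries _ _).2 ⟨r, hrR, Or.inl h.symm⟩))
    (fun h => hr2 ((mem_entries _ _).2 ⟨r, hrR, Or.inl h.symm⟩))
    (fun h => hzR ((mem_entries _ _).2 ⟨r, hrR, Or.inl h.symm⟩))
    (fun h => hwR ((mem_entries _ _).2 ⟨r, hrR, Or.inr h.symm⟩))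
    (fun h => hr1 ((mem_entries _ _).2 ⟨r, hrR, Or.inr h.symm⟩))
    (fun h => hr2 ((mem_entries _ _).2 ⟨r, hrR, Or.inr h.symm⟩))
    (fun h => hzR ((mem_entries _ _).2 ⟨r, hrR, Or.inr h.symm⟩))
  have s1 := Finset.sum_le_sum (fun r hrR => (hthird r hrR).1)
  have s2 := Finset.sum_le_sum (fun r hrR => (hthird r hrR).2)
  rw [Finset.sum_add_distrib, Finset.sum_add_distrib (g := fun r => wt (x, y) r + wt r (x, y))]
    at s1 s2
  have hent1 : entries (insert (w, y) (insert (x, z) R)) = entries P := by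
    rw [e1]; exact (entries_re w x y z R).1
  have hent2 : entries (insert (w, x) (insert (y, z) R)) = entries P := by
    rw [e1]; exact (entries_re w x y z R).2
  obtain ⟨wB, wD, wF⟩ := self_pairs w x y z hqr1 hrlt hqr2
  have WB := Wpot_insert nB
  have WD := Wpot_insert nD
  have WF := Wpot_insert nF
  rw [Finset.sum_insert nA, Wpot_insert nA] at WB
  rw [Finset.sum_insert nC, Wpot_insert nC] at WD
  rw [Finset.sum_insert nE, Wpot_insert nE] at WF
  rw [← e1] at WB
  refine ⟨_, _, tD, tF, ?_, ?_, ?_⟩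
  · unfold Mpot mpot
    rw [hent1]
    omega
  · unfold Mpot mpot
    rw [hent2]
    omega
  · intro f
    rw [e1, DP_insert nB tB, DP_insert nA tA, DP_insert nD tD, DP_insert nC tC,
      DP_insert nF tF, DP_insert nE tE]
    simp only
    rw [four_identity w x y z hqr1.ne hwy.ne hqlt.ne hrlt.ne hxz.ne hqr2.ne]
    refine (sNorm_add_le_aux _ _).trans ?_
    rw [sNorm_perm_aux, sNorm_perm_aux]

lemma shift_step {k : ℕ} {P : Finset (Fin n × Fin n)} (hP : IsTuple k P) (hs : ¬ IsShifted P) :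
    ∃ P1 P2, IsTuple k P1 ∧ IsTuple k P2 ∧ Mpot k P1 < Mpot k P ∧ Mpot k P2 < Mpot k P ∧
      ∀ f : SlicePoint n p → ℝ, sNorm (DP P f) ≤ sNorm (DP P1 f) + sNorm (DP P2 f) := by
  obtain ⟨q, hq, c₀, hc₀q, hc₀⟩ : ∃ q ∈ P, ∃ c : Fin n, c ≤ q.1 ∧ c ∉ entries P := by
    unfold IsShifted at hs
    simp only [← mem_entries] at hs
    push Not at hs
    exact hs
  obtain ⟨c, hcE, hcmin, hcle⟩ : ∃ c : Fin n, c ∉ entries P ∧ (∀ i < c, i ∈ entries P) ∧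
      c ≤ c₀ := by
    have hne : (Finset.univ.filter (fun i : Fin n => i ∉ entries P)).Nonempty :=
      ⟨c₀, by simpa using hc₀⟩
    refine ⟨Finset.min' _ hne, ?_, ?_, ?_⟩
    · exact (Finset.mem_filter.1 (Finset.min'_mem _ hne)).2
    · intro i hi
      by_contra hcon
      exact absurd (Finset.min'_le _ i (by simpa using hcon)) (not_le.2 hi)
    · exact Finset.min'_le _ _ (by simpa using hc₀)
  have hqE : q.1 ∈ entries P := (mem_entries _ _).2 ⟨q, hq, Or.inl rfl⟩
  have hca : c < q.1 := lt_of_le_of_ne (hcle.trans hc₀q) (fun h => hcE (h ▸ hqE))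
  have hc2k : c.val < 2 * k := by
    have hsub : Finset.Iio c ⊆ (entries P).erase q.1 := by
      intro i hi
      have hi' := Finset.mem_Iio.1 hi
      exact Finset.mem_erase.2 ⟨(hi'.trans hca).ne, hcmin i hi'⟩
    have h1 := Finset.card_le_card hsub
    rw [Finset.card_erase_of_mem hqE, Fin.card_Iio] at h1
    have h2 := card_entries P
    have h3 : 0 < (entries P).card := Finset.card_pos.2 ⟨_, hqE⟩
    rw [hP.1] at h2
    omega
  obtain ⟨k', rfl⟩ : ∃ k', k = k' + 1 := ⟨k - 1, by omega⟩
  obtain ⟨hR, hqlt, hq1, hq2⟩ := tuple_erase hP hq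
  have hnq : q ∉ P.erase q := Finset.notMem_erase _ _
  have e1 : P = insert q (P.erase q) := (Finset.insert_erase hq).symm
  generalize P.erase q = R at *
  obtain ⟨a, b⟩ := q
  simp only at *
  have hcR : c ∉ entries R := by
    rw [e1, entries_insert] at hcE
    tauto
  have hab := hqlt
  have hcb : c < b := hca.trans hab
  have hpot : ∀ d : Fin n, c ∉ entries P → (d = a ∨ d = b) → (c, d) ∉ R →
      Mpot (k' + 1) (insert (c, d) R) < Mpot (k' + 1) P := by
    intro d _ hd hnd
    have hW := Wpot_insert hnd
    have hW2 := Wpot_insert hnq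
    rw [← e1] at hW2
    have hb : ∑ r ∈ R, (wt (c, d) r + wt r (c, d)) ≤ ∑ r ∈ R, 2 :=
      Finset.sum_le_sum (fun r _ => wt_pair _ r)
    rw [Finset.sum_const, hR.1, smul_eq_mul] at hb
    have hm : mpot (k' + 1) (insert (c, d) R) < mpot (k' + 1) P := by
      unfold mpot
      apply Finset.card_lt_card
      rw [Finset.ssubset_iff_of_subset]
      · refine ⟨c.val, ?_, ?_⟩
        · rw [Finset.mem_filter, Finset.mem_range]
          exact ⟨hc2k, fun hall => hcE (hall c le_rfl)⟩
        · rw [Finset.mem_filter]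
          rintro ⟨_, hn⟩
          apply hn
          intro i hi
          rw [entries_insert]
          rcases (Fin.le_def.2 hi : i ≤ c).lt_or_eq with hlt | heq
          · have := hcmin i hlt
            rw [e1, entries_insert] at this
            rcases this with h | h | h
            · exact absurd ((show i = a from h) ▸ hlt) (not_lt.2 hca.le)
            · exact absurd ((show i = b from h) ▸ hlt) (not_lt.2 hcb.le)
            · exact Or.inr (Or.inr h)
          · exact Or.inl heq
      · intro j hj
        rw [Finset.mem_filter] at hj ⊢
        refine ⟨hj.1, fun hall => hj.2 ?_⟩
        intro i hi
        have hjc : j < c.val := by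
          by_contra hcon
          exact hcE (hall c (not_lt.1 hcon))
        have hic : i < c := Fin.lt_def.2 (lt_of_le_of_lt hi hjc)
        have := hall i hi
        rw [e1, entries_insert] at this
        rw [entries_insert]
        rcases this with h | h | h
        · exact absurd ((show i = a from h) ▸ hic) (not_lt.2 hca.le)
        · exact absurd ((show i = b from h) ▸ hic) (not_lt.2 hcb.le)
        · exact Or.inr (Or.inr h)
    unfold Mpot
    have hmul := Nat.mul_le_mul_left (2 * (k' + 1)) (Nat.succ_le_of_lt hm)
    rw [Nat.succ_eq_add_one, Nat.mul_add] at hmul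
    omega
  obtain ⟨nA, tA⟩ := tuple_insert (q := (c, a)) hR hca hcR hq1
  obtain ⟨nB, tB⟩ := tuple_insert (q := (c, b)) hR hcb hcR hq2
  refine ⟨_, _, tA, tB, hpot a hcE (Or.inl rfl) nA, hpot b hcE (Or.inr rfl) nB, ?_⟩
  intro f
  rw [e1, DP_insert hnq (e1 ▸ hP), DP_insert nA tA, DP_insert nB tB]
  simp only
  rw [three_identity a b c hab.ne hca.ne' hcb.ne', Dij_comm_aux c a, Dij_comm_aux c b]
  refine (sNorm_add_le_aux _ _).trans ?_
  rw [sNorm_perm_aux, sNorm_perm_aux]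

lemma any_step {k : ℕ} {P : Finset (Fin n × Fin n)} (hP : IsTuple k P)
    (hs : ¬ (IsShifted P ∧ IsSorted P)) :
    ∃ P1 P2, IsTuple k P1 ∧ IsTuple k P2 ∧ Mpot k P1 < Mpot k P ∧ Mpot k P2 < Mpot k P ∧
      ∀ f : SlicePoint n p → ℝ, sNorm (DP P f) ≤ sNorm (DP P1 f) + sNorm (DP P2 f) := by
  by_cases h : IsShifted P
  · exact sort_step hP (fun h' => hs ⟨h, h'⟩)
  · exact shift_step hP h

/-- Suppose `‖D_{P'} f‖₂ ≤ ε` for every shifted sorted `k`-tuple `P'`. Then: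
(1) `‖D_P f‖₂ ≤ 2^{10 k²} ε` for every `k`-tuple `P`;
(2) if, moreover, every `k`-tuple `P` has `‖D_P f‖₂ ≤ ε` or `‖D_P f‖₂ > 3 ε`, then
every `k`-tuple `P` has `‖D_P f‖₂ ≤ ε`. -/
theorem derivative_generating_set (n : ℕ) (p : ℝ) (hp : 0 < p) (hp1 : p ≤ 1)
    (hpn : ∃ m : ℤ, (m : ℝ) = p * n) (k : ℕ) (hk : 1 ≤ k)
    (f : SlicePoint n p → ℝ) (ε : ℝ)
    (h : ∀ P' : Finset (Fin n × Fin n), IsTuple k P' → IsShifted P' → IsSorted P' →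
      sNorm (DP P' f) ≤ ε) :
    (∀ P : Finset (Fin n × Fin n), IsTuple k P →
      sNorm (DP P f) ≤ (2 : ℝ) ^ (10 * k ^ 2) * ε) ∧
    ((∀ P : Finset (Fin n × Fin n), IsTuple k P →
        sNorm (DP P f) ≤ ε ∨ sNorm (DP P f) > 3 * ε) →
      ∀ P : Finset (Fin n × Fin n), IsTuple k P → sNorm (DP P f) ≤ ε) := by
  constructor
  · have key : ∀ N : ℕ, ∀ P : Finset (Fin n × Fin n), IsTuple k P → Mpot k P ≤ N →
        0 ≤ ε ∧ sNorm (DP P f) ≤ (2 : ℝ) ^ N * ε := by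
      intro N
      induction N with
      | zero =>
        intro P hP hM
        by_cases hs : IsShifted P ∧ IsSorted P
        · have := h P hP hs.1 hs.2
          exact ⟨(sNorm_nonneg_aux _).trans this, by simpa using this⟩
        · obtain ⟨P1, P2, _, _, h3, _⟩ := any_step (p := p) hP hs
          omega
      | succ N ih =>
        intro P hP hM
        by_cases hs : IsShifted P ∧ IsSorted P
        · have := h P hP hs.1 hs.2
          have h0 := (sNorm_nonneg_aux _).trans this
          refine ⟨h0, this.trans ?_⟩
          exact le_mul_of_one_le_left h0 (one_le_pow₀ (by norm_num))
        · obtain ⟨P1, P2, t1, t2, h1, h2, hle⟩ := any_step (p := p) hP hs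
          obtain ⟨h0, b1⟩ := ih P1 t1 (by omega)
          obtain ⟨_, b2⟩ := ih P2 t2 (by omega)
          refine ⟨h0, ?_⟩
          have := hle f
          rw [pow_succ]
          linarith
    intro P hP
    exact (key _ P hP (Mpot_le P hP)).2
  · intro hgap
    have key : ∀ N : ℕ, ∀ P : Finset (Fin n × Fin n), IsTuple k P → Mpot k P < N →
        sNorm (DP P f) ≤ ε := by
      intro N
      induction N with
      | zero => intro P _ hM; omega
      | succ N ih =>
        intro P hP hM
        by_cases hs : IsShifted P ∧ IsSorted P
        · exact h P hP hs.1 hs.2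
        · obtain ⟨P1, P2, t1, t2, h1, h2, hle⟩ := any_step (p := p) hP hs
          have b1 := ih P1 t1 (by omega)
          have b2 := ih P2 t2 (by omega)
          have h0 := (sNorm_nonneg_aux _).trans b1
          have := hle f
          rcases hgap P hP with hg | hg
          · exact hg
          · linarith
    intro P hP
    exact key _ P hP (Nat.lt_succ_self _)
end
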